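/- arXiv:0811.0103 — 4 statements merged into one kernel-verified Lean document; each statement's English description precedes it below -/
import Mathlib

section
/- Let n ≥ 1 and let P₀,…,P_n, Q ∈ ℂ[t₁,…,t_n] with Q ≠ 0, and set S = supp(Q) ∪ supp(P₀) ∪ ⋯ ∪ supp(P_n) ⊂ ℕⁿ (the union of the supports of the polynomials x_iQ − P_i, viewed as subsets of ℝⁿ). Assume that the kernel of the ℂ-algebra homomorphism ℂ[x₀,…,x_n] → ℂ(t₁,…,t_n) sending x_i to P_i/Q is a nonzero principal ideal generated by φ. Then the total degree of φ is at most n! times the n-dimensional Lebesgue volume of the convex hull of S in ℝⁿ. -/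
/-- The support of a multivariate polynomial, viewed as a subset of `ℝⁿ`. -/
noncomputable def suppSet (n : ℕ) (p : MvPolynomial (Fin n) ℂ) : Set (Fin n → ℝ) :=
  (fun d : Fin n →₀ ℕ => fun i => (d i : ℝ)) '' ↑p.support

/-!
Let `K` be the convex hull of the supports and `d` the degree of `φ`. Multiplying `f(P/Q)` by
`Q ^ m` sends the polynomials `f` of degree at most `m = k + d` to polynomials with support in
`m • K`, and the kernel of this map consists of multiples of `φ`, whose cofactors have degree at
most `k`. Comparing dimensions, `m • K` contains at least
`(m + n + 1).choose (n + 1) - (k + n + 1).choose (n + 1) ≥ d * (k + n).choose n` points of `ℕⁿ`.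
Dividing by `m ^ n` and letting `k → ∞`, the number of points becomes at most `vol(K)` and the lower
bound becomes `d / n!`.
-/

namespace ImplicitEquation

open MvPolynomial MeasureTheory
open scoped Pointwise

section Exponents

variable {σ R : Type*}

/-- The embedding of the exponent vectors `ℕ^σ` into `ℝ^σ`. -/
noncomputable def realExponent : (σ →₀ ℕ) →+ (σ → ℝ) :=
  ((Nat.castAddMonoidHom ℝ).compLeft σ).comp Finsupp.coeFnAddHom

lemma realExponent_injective : Function.Injective (realExponent (σ := σ)) := fun _ _ h =>
  Finsupp.ext fun i => Nat.cast_injective (congrFun h i)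

lemma realExponent_mem_span_basisFun [Finite σ] (s : σ →₀ ℕ) :
    realExponent s ∈ Submodule.span ℤ (Set.range (Pi.basisFun ℝ σ)) :=
  (Module.Basis.mem_span_iff_repr_mem ..).2 fun i => ⟨(s i : ℤ), by simp [realExponent]⟩

/-- The support of a polynomial as a subset of `ℝ^σ`; this is `suppSet` for arbitrary coefficients
and arbitrary variables. -/
def realSupport [CommSemiring R] (p : MvPolynomial σ R) : Set (σ → ℝ) :=
  realExponent '' p.support

lemma finite_realSupport [CommSemiring R] (p : MvPolynomial σ R) : (realSupport p).Finite :=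
  p.support.finite_toSet.image _

lemma realSupport_nonempty [CommSemiring R] {p : MvPolynomial σ R} (hp : p ≠ 0) :
    (realSupport p).Nonempty :=
  Set.Nonempty.image _ (support_nonempty.2 hp)

/-- The exponent vectors lying in the dilate `m • K`. -/
def dilatedExponents (K : Set (σ → ℝ)) (m : ℕ) : Set (σ →₀ ℕ) :=
  realExponent ⁻¹' ((m : ℝ) • K)

variable {K : Set (σ → ℝ)}

lemma dilatedExponents_add_subset (hK : Convex ℝ K) (a b : ℕ) :
    dilatedExponents K a + dilatedExponents K b ⊆ dilatedExponents K (a + b) := by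
  rintro _ ⟨s, hs, t, ht, rfl⟩
  rw [dilatedExponents, Set.mem_preimage, map_add, Nat.cast_add,
    hK.add_smul a.cast_nonneg b.cast_nonneg]
  exact Set.add_mem_add hs ht

lemma zero_mem_dilatedExponents_zero (hK : K.Nonempty) : 0 ∈ dilatedExponents K 0 := by
  simp [dilatedExponents, Set.zero_smul_set hK]

lemma mem_restrictSupport_dilatedExponents_one [CommSemiring R] {p : MvPolynomial σ R}
    (hp : realSupport p ⊆ K) : p ∈ restrictSupport R (dilatedExponents K 1) := by
  simpa [mem_restrictSupport_iff, dilatedExponents, realSupport] using hp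

lemma gradedMonoid_restrictSupport_dilatedExponents (R : Type*) [CommSemiring R]
    (hK : Convex ℝ K) (hne : K.Nonempty) :
    SetLike.GradedMonoid fun m => restrictSupport R (dilatedExponents K m) where
  one_mem := (monomial_mem_restrictSupport R).2 (.inl (zero_mem_dilatedExponents_zero hne))
  mul_mem a b _ _ hp hq := by
    refine restrictSupport_mono R (dilatedExponents_add_subset hK a b) ?_
    rw [restrictSupport_add]
    exact Submodule.mul_mem_mul hp hq

end Exponents

section LatticePoints

open Filter Topology

variable {σ : Type*} {K : Set (σ → ℝ)}

lemma finite_dilatedExponents [Finite σ] (hK : Bornology.IsBounded K) (m : ℕ) :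
    (dilatedExponents K m).Finite := by
  cases nonempty_fintype σ
  exact ((ZSpan.setFinite_inter (Pi.basisFun ℝ σ) (hK.smul₀ (m : ℝ))).preimage
    realExponent_injective.injOn).subset fun s hs => ⟨hs, realExponent_mem_span_basisFun s⟩

lemma ncard_dilatedExponents_le [Finite σ] (hK : Bornology.IsBounded K) {m : ℕ} (hm : m ≠ 0) :
    (dilatedExponents K m).ncard ≤
      Nat.card ↑(K ∩ (m : ℝ)⁻¹ • (Submodule.span ℤ (Set.range (Pi.basisFun ℝ σ)) :
        Set (σ → ℝ))) := by
  cases nonempty_fintype σ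
  set L := (Submodule.span ℤ (Set.range (Pi.basisFun ℝ σ)) : Set (σ → ℝ))
  have hm' : (m : ℝ) ≠ 0 := Nat.cast_ne_zero.2 hm
  have hscale : K ∩ (m : ℝ)⁻¹ • L = (m : ℝ)⁻¹ • ((m : ℝ) • K ∩ L) := by
    rw [Set.smul_set_inter₀ (inv_ne_zero hm'), inv_smul_smul₀ hm']
  rw [hscale, ← Set.image_smul, Nat.card_coe_set_eq,
    Set.ncard_image_of_injective _ (smul_right_injective _ (inv_ne_zero hm'))]
  exact Set.ncard_le_ncard_of_injOn realExponent
    (fun s hs => ⟨hs, realExponent_mem_span_basisFun s⟩) realExponent_injective.injOn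
    (ZSpan.setFinite_inter _ (hK.smul₀ _))

lemma natCast_le_mul_volume_of_mul_pow_le_ncard [Fintype σ] (hb : Bornology.IsBounded K)
    (hmeas : MeasurableSet K) (hfr : volume (frontier K) = 0) {a b d : ℕ}
    (h : ∀ k, a * k ^ Fintype.card σ ≤ b * (dilatedExponents K (k + d)).ncard) :
    (a : ENNReal) ≤ b * volume K := by
  have hleft : Tendsto (fun k : ℕ => (a : ℝ) * ((k : ℝ) / (k + d)) ^ Fintype.card σ) atTop
      (𝓝 a) := by
    simpa using ((tendsto_natCast_div_add_atTop (d : ℝ)).pow (Fintype.card σ)).const_mul (a : ℝ)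
  have hright := ((tendsto_card_div_pow_atTop_volume K hb hmeas hfr).comp
    (tendsto_add_atTop_nat d)).const_mul (b : ℝ)
  have hreal : (a : ℝ) ≤ b * volume.real K := by
    refine le_of_tendsto_of_tendsto hleft hright ?_
    filter_upwards [eventually_ne_atTop 0] with k hk
    have hle := (h k).trans (Nat.mul_le_mul_left b (ncard_dilatedExponents_le hb
      (m := k + d) (by omega)))
    simp only [Function.comp_apply]
    rw [div_pow, ← mul_div_assoc, ← mul_div_assoc, ← Nat.cast_add]
    exact div_le_div_of_nonneg_right (by exact_mod_cast hle) (by positivity)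
  rw [← ofReal_measureReal hb.measure_lt_top.ne, ← ENNReal.ofReal_natCast a,
    ← ENNReal.ofReal_natCast b, ← ENNReal.ofReal_mul b.cast_nonneg]
  exact ENNReal.ofReal_le_ofReal hreal

end LatticePoints

section Counting

lemma sum_range_multichoose (n m : ℕ) :
    ∑ j ∈ Finset.range (m + 1), n.multichoose j = (n + 1).multichoose m := by
  induction m with
  | zero => simp
  | succ m ih => rw [Finset.sum_range_succ, ih, Nat.multichoose_succ_succ, add_comm]

lemma ncard_setOf_degree_le (ι : Type*) [Fintype ι] (m : ℕ) :
    {s : ι →₀ ℕ | s.degree ≤ m}.ncard = (m + Fintype.card ι).choose (Fintype.card ι) := by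
  classical
  have hunion : {s : ι →₀ ℕ | s.degree ≤ m} = ↑((Finset.range (m + 1)).biUnion
      fun j => (Finset.univ : Finset ι).finsuppAntidiag j) := by
    ext s
    simp [Finset.mem_finsuppAntidiag, Finsupp.degree_eq_sum]
  have hdisjoint : (Finset.range (m + 1) : Set ℕ).PairwiseDisjoint
      fun j => (Finset.univ : Finset ι).finsuppAntidiag j := by
    refine fun i _ j _ hij => Finset.disjoint_left.2 fun s hi hj => hij ?_
    exact (Finset.mem_finsuppAntidiag.1 hi).1.symm.trans (Finset.mem_finsuppAntidiag.1 hj).1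
  rw [hunion, Set.ncard_coe_finset, Finset.card_biUnion hdisjoint]
  simp only [Finset.card_finsuppAntidiag_nat_eq_multichoose, Finset.card_univ]
  rw [sum_range_multichoose, Nat.multichoose_eq, add_right_comm, Nat.add_sub_cancel, add_comm,
    Nat.choose_symm_add]

lemma choose_add_mul_choose_le (n k d : ℕ) :
    (k + (n + 1)).choose (n + 1) + d * (k + n).choose n ≤ (k + d + (n + 1)).choose (n + 1) := by
  induction d with
  | zero => simp
  | succ d ih =>
    have hmono : (k + n).choose n ≤ (k + d + 1 + n).choose n := Nat.choose_le_choose _ (by omega)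
    have hpascal : (k + (d + 1) + (n + 1)).choose (n + 1) =
        (k + d + 1 + n).choose n + (k + d + (n + 1)).choose (n + 1) := by
      rw [show k + (d + 1) + (n + 1) = k + d + 1 + n + 1 by omega, Nat.choose_succ_succ,
        show k + d + 1 + n = k + d + (n + 1) by omega]
    rw [hpascal, Nat.succ_mul]
    omega

lemma pow_le_factorial_mul_choose (n k : ℕ) : k ^ n ≤ n.factorial * (k + n).choose n :=
  calc k ^ n ≤ (k + 1) ^ n := Nat.pow_le_pow_left k.le_succ n
    _ ≤ (k + 1).ascFactorial n := Nat.pow_succ_le_ascFactorial _ _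
    _ = n.factorial * (k + n).choose n := Nat.ascFactorial_eq_factorial_mul_choose _ _

end Counting

section Dimensions

lemma finrank_restrictSupport {σ R : Type*} [CommSemiring R] [StrongRankCondition R]
    (s : Set (σ →₀ ℕ)) :
    Module.finrank R (restrictSupport R s) = s.ncard :=
  Module.finrank_eq_nat_card_basis (basisRestrictSupport R s)

lemma finrank_restrictTotalDegree (ι R : Type*) [Fintype ι] [CommSemiring R]
    [StrongRankCondition R] (m : ℕ) :
    Module.finrank R (restrictTotalDegree ι R m) =
      (m + Fintype.card ι).choose (Fintype.card ι) := by
  rw [restrictTotalDegree, finrank_restrictSupport]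
  exact ncard_setOf_degree_le ι m

lemma finrank_map_add_finrank_inf_ker {F V V' : Type*} [DivisionRing F] [AddCommGroup V]
    [Module F V] [AddCommGroup V'] [Module F V'] (f : V →ₗ[F] V') (W : Submodule F V)
    [FiniteDimensional F W] :
    Module.finrank F (W.map f) + Module.finrank F ↥(W ⊓ LinearMap.ker f) = Module.finrank F W := by
  rw [← LinearMap.finrank_range_add_finrank_ker (f.domRestrict W), LinearMap.range_domRestrict,
    LinearMap.ker_domRestrict, ← Submodule.map_comap_subtype, Submodule.finrank_map_subtype_eq]

lemma restrictTotalDegree_inf_span_singleton_le {ι R : Type*} [CommSemiring R] [NoZeroDivisors R]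
    (φ : MvPolynomial ι R) (k : ℕ) :
    restrictTotalDegree ι R (k + φ.totalDegree) ⊓ (Ideal.span {φ}).restrictScalars R ≤
      (restrictTotalDegree ι R k).map (LinearMap.mulLeft R φ) := by
  rintro f ⟨hdeg, hf⟩
  obtain ⟨g, rfl⟩ := Ideal.mem_span_singleton'.1 hf
  rcases eq_or_ne (g * φ) 0 with h0 | h0
  · rw [h0]
    exact zero_mem _
  · refine ⟨g, ?_, mul_comm _ _⟩
    rw [SetLike.mem_coe, mem_restrictTotalDegree] at hdeg ⊢
    rw [totalDegree_mul_of_isDomain (left_ne_zero_of_mul h0) (right_ne_zero_of_mul h0)] at hdeg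
    exact Nat.le_of_add_le_add_right hdeg

end Dimensions

section ClearDenominators

variable {ι R A : Type*} [CommSemiring R] [CommSemiring A] [Algebra R A]

/-- The linear map `f ↦ Q ^ m * f(P / Q)` with the denominators cleared, that is, the evaluation
at `(P, Q)` of the degree-`m` homogenization of `f`. The exponent `m - s.degree` truncates, so this
is meaningful only for `f` of total degree at most `m`. -/
noncomputable def clearDenominators (P : ι → A) (Q : A) (m : ℕ) : MvPolynomial ι R →ₗ[R] A :=
  (basisMonomials ι R).constr R fun s => Q ^ (m - s.degree) * ∏ i ∈ s.support, P i ^ s i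

lemma clearDenominators_monomial_one (P : ι → A) (Q : A) (m : ℕ) (s : ι →₀ ℕ) :
    clearDenominators P Q m (monomial s (1 : R)) =
      Q ^ (m - s.degree) * ∏ i ∈ s.support, P i ^ s i :=
  (basisMonomials ι R).constr_basis R _ s

lemma map_clearDenominators_restrictTotalDegree_le (𝒜 : ℕ → Submodule R A)
    [SetLike.GradedMonoid 𝒜] {P : ι → A} {Q : A} (hP : ∀ i, P i ∈ 𝒜 1) (hQ : Q ∈ 𝒜 1) (m : ℕ) :
    (restrictTotalDegree ι R m).map (clearDenominators P Q m) ≤ 𝒜 m := by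
  rw [restrictTotalDegree, restrictSupport_eq_span, Submodule.map_span_le]
  rintro _ ⟨s, hs, rfl⟩
  have hdeg : s.degree ≤ m := hs
  have hmem := SetLike.mul_mem_graded (SetLike.pow_mem_graded (m - s.degree) hQ)
    (SetLike.prod_pow_mem_graded 𝒜 (fun _ => 1) P (F := s.support) s fun i _ => hP i)
  simpa [clearDenominators_monomial_one, ← Finsupp.degree_apply, Nat.sub_add_cancel hdeg]
    using hmem

lemma algebraMap_clearDenominators {L : Type*} [Field L] [Algebra A L] [Algebra R L]
    [IsScalarTower R A L] (P : ι → A) {Q : A} (hQ : algebraMap A L Q ≠ 0) {m : ℕ}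
    {f : MvPolynomial ι R} (hf : f ∈ restrictTotalDegree ι R m) :
    algebraMap A L (clearDenominators P Q m f) =
      algebraMap A L Q ^ m * aeval (fun i => algebraMap A L (P i) / algebraMap A L Q) f := by
  let cleared : MvPolynomial ι R →ₗ[R] L :=
    (IsScalarTower.toAlgHom R A L).toLinearMap ∘ₗ clearDenominators P Q m
  let scaled : MvPolynomial ι R →ₗ[R] L := LinearMap.mulLeft R (algebraMap A L Q ^ m) ∘ₗ
    (aeval fun i => algebraMap A L (P i) / algebraMap A L Q).toLinearMap
  suffices Set.EqOn cleared scaled (restrictTotalDegree ι R m) from this hf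
  rw [restrictTotalDegree, restrictSupport_eq_span]
  refine LinearMap.eqOn_span ?_
  rintro _ ⟨s, hs, rfl⟩
  have hdeg : s.degree ≤ m := hs
  have hpow : algebraMap A L Q ^ m = algebraMap A L Q ^ (m - s.degree) *
      algebraMap A L Q ^ s.degree := by
    rw [← pow_add, Nat.sub_add_cancel hdeg]
  simp only [cleared, scaled, LinearMap.comp_apply, AlgHom.toLinearMap_apply,
    IsScalarTower.coe_toAlgHom', LinearMap.mulLeft_apply, clearDenominators_monomial_one,
    aeval_monomial, Finsupp.prod, map_mul, map_pow, map_prod, map_one, one_mul, div_pow,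
    Finset.prod_div_distrib, Finset.prod_pow_eq_pow_sum, ← Finsupp.degree_apply, hpow]
  field_simp

lemma restrictTotalDegree_inf_ker_clearDenominators_le {L : Type*} [Field L] [Algebra A L]
    [Algebra R L] [IsScalarTower R A L] (P : ι → A) {Q : A} (hQ : algebraMap A L Q ≠ 0) (m : ℕ) :
    restrictTotalDegree ι R m ⊓ LinearMap.ker (clearDenominators P Q m) ≤
      (RingHom.ker (aeval (R := R) fun i => algebraMap A L (P i) / algebraMap A L Q)
        ).restrictScalars R := by
  rintro f ⟨hdeg, hf⟩
  have hscaled := algebraMap_clearDenominators P hQ hdeg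
  rw [LinearMap.mem_ker.1 hf, map_zero, eq_comm] at hscaled
  exact (mul_eq_zero.1 hscaled).resolve_left (pow_ne_zero m hQ)

end ClearDenominators

section DimensionBound

variable {σ ι F L : Type*} [Finite σ] [Finite ι] [Field F] [Field L]
  [Algebra (MvPolynomial σ F) L] [Algebra F L] [IsScalarTower F (MvPolynomial σ F) L]

lemma finrank_restrictTotalDegree_le_add_ncard_dilatedExponents {P : ι → MvPolynomial σ F}
    {Q : MvPolynomial σ F} (hQ : algebraMap (MvPolynomial σ F) L Q ≠ 0) {φ : MvPolynomial ι F}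
    (hker : RingHom.ker (aeval (R := F) fun i =>
      algebraMap (MvPolynomial σ F) L (P i) / algebraMap (MvPolynomial σ F) L Q) ≤ Ideal.span {φ})
    {K : Set (σ → ℝ)} (hK : Convex ℝ K) (hb : Bornology.IsBounded K)
    (hPK : ∀ i, realSupport (P i) ⊆ K) (hQK : realSupport Q ⊆ K) (k : ℕ) :
    Module.finrank F (restrictTotalDegree ι F (k + φ.totalDegree)) ≤
      (dilatedExponents K (k + φ.totalDegree)).ncard +
        Module.finrank F (restrictTotalDegree ι F k) := by
  set m := k + φ.totalDegree
  have hne : K.Nonempty := (realSupport_nonempty (ne_zero_of_map hQ)).mono hQK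
  have := gradedMonoid_restrictSupport_dilatedExponents F hK hne
  have := (finite_dilatedExponents hb m).to_subtype
  have : Module.Finite F (restrictSupport F (dilatedExponents K m)) :=
    .of_basis (basisRestrictSupport F _)
  have hmap := map_clearDenominators_restrictTotalDegree_le
    (fun m => restrictSupport F (dilatedExponents K m))
    (fun i => mem_restrictSupport_dilatedExponents_one (hPK i))
    (mem_restrictSupport_dilatedExponents_one hQK) m
  have hinf : restrictTotalDegree ι F m ⊓ LinearMap.ker (clearDenominators P Q m) ≤
      (restrictTotalDegree ι F k).map (LinearMap.mulLeft F φ) :=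
    (le_inf inf_le_left
      ((restrictTotalDegree_inf_ker_clearDenominators_le P hQ m).trans hker)).trans
      (restrictTotalDegree_inf_span_singleton_le φ k)
  rw [← finrank_map_add_finrank_inf_ker (clearDenominators P Q m),
    ← finrank_restrictSupport (R := F)]
  exact add_le_add (Submodule.finrank_mono hmap)
    ((Submodule.finrank_mono hinf).trans (Submodule.finrank_map_le _ _))

end DimensionBound

end ImplicitEquation

open ImplicitEquation in
theorem totalDegree_implicit_le_common_denominator_general {σ ι F L : Type*} [Fintype σ]
    [Fintype ι] (hcard : Fintype.card ι = Fintype.card σ + 1) [Field F] [Field L]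
    [Algebra (MvPolynomial σ F) L] [Algebra F L] [IsScalarTower F (MvPolynomial σ F) L]
    (P : ι → MvPolynomial σ F) (Q : MvPolynomial σ F)
    (hQ : algebraMap (MvPolynomial σ F) L Q ≠ 0) (φ : MvPolynomial ι F)
    (hker : RingHom.ker (MvPolynomial.aeval (R := F) fun i =>
      algebraMap (MvPolynomial σ F) L (P i) / algebraMap (MvPolynomial σ F) L Q) =
        Ideal.span {φ}) :
    (φ.totalDegree : ENNReal) ≤ ((Fintype.card σ).factorial : ENNReal) *
      MeasureTheory.volume (convexHull ℝ (realSupport Q ∪ ⋃ i, realSupport (P i))) := by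
  set S := realSupport Q ∪ ⋃ i, realSupport (P i)
  have hS : S.Finite := (finite_realSupport Q).union (Set.finite_iUnion fun i =>
    finite_realSupport (P i))
  have hcompact : IsCompact (convexHull ℝ S) := hS.isCompact_convexHull ℝ
  have hconvex : Convex ℝ (convexHull ℝ S) := convex_convexHull ℝ S
  have hSK : S ⊆ convexHull ℝ S := subset_convexHull ℝ S
  refine natCast_le_mul_volume_of_mul_pow_le_ncard hcompact.isBounded
    hcompact.measurableSet (hconvex.addHaar_frontier _) (d := φ.totalDegree) fun k => ?_
  have hdim := finrank_restrictTotalDegree_le_add_ncard_dilatedExponents hQ hker.le hconvex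
    hcompact.isBounded
    (fun i => (Set.subset_iUnion (fun i => realSupport (P i)) i).trans
      (Set.subset_union_right.trans hSK))
    (Set.subset_union_left.trans hSK) k
  rw [finrank_restrictTotalDegree, finrank_restrictTotalDegree, hcard] at hdim
  have hgrowth := choose_add_mul_choose_le (Fintype.card σ) k φ.totalDegree
  calc φ.totalDegree * k ^ Fintype.card σ
    _ ≤ φ.totalDegree * ((Fintype.card σ).factorial * (k + Fintype.card σ).choose _) :=
      Nat.mul_le_mul_left _ (pow_le_factorial_mul_choose _ k)
    _ = (Fintype.card σ).factorial * (φ.totalDegree * (k + Fintype.card σ).choose _) :=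
      Nat.mul_left_comm ..
    _ ≤ _ := Nat.mul_le_mul_left _ (by omega)

/-- Degree bound for the implicit equation of a rational parameterization
`x_i = P_i / Q` with a common denominator: the total degree of `φ` is at most `n!`
times the volume of the convex hull of the union of the supports of the `x_i Q - P_i`. -/
theorem totalDegree_implicit_le_common_denominator (n : ℕ) (hn : 1 ≤ n)
    (P : Fin (n + 1) → MvPolynomial (Fin n) ℂ) (Q : MvPolynomial (Fin n) ℂ) (hQ : Q ≠ 0)
    (φ : MvPolynomial (Fin (n + 1)) ℂ) (hφ : φ ≠ 0)
    (hker : RingHom.ker (MvPolynomial.aeval (R := ℂ)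
        (fun i : Fin (n + 1) =>
          algebraMap (MvPolynomial (Fin n) ℂ) (FractionRing (MvPolynomial (Fin n) ℂ)) (P i) /
          algebraMap (MvPolynomial (Fin n) ℂ) (FractionRing (MvPolynomial (Fin n) ℂ)) Q) :
        MvPolynomial (Fin (n + 1)) ℂ →+* FractionRing (MvPolynomial (Fin n) ℂ)) =
      Ideal.span {φ}) :
    (φ.totalDegree : ENNReal) ≤ (n.factorial : ENNReal) *
      MeasureTheory.volume (convexHull ℝ (suppSet n Q ∪ ⋃ i, suppSet n (P i))) := by
  simpa only [Fintype.card_fin] using!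
    totalDegree_implicit_le_common_denominator_general (by simp) P Q (by simpa using hQ) φ hker
end

section
/- Let n ≥ 1 and let P₀,…,P_n, Q₀,…,Q_n ∈ ℂ[t₁,…,t_n] with every Q_i ≠ 0. Define S ⊂ ℕⁿ as the union over i = 0,…,n of the Minkowski sums supp(P_i) + Σ_{j≠i} supp(Q_j), together with the Minkowski sum Σ_{i=0}^n supp(Q_i) (all sums of sets taken elementwise). Assume that the kernel of the ℂ-algebra homomorphism ℂ[x₀,…,x_n] → ℂ(t₁,…,t_n) sending x_i to P_i/Q_i is a nonzero principal ideal generated by φ. Then the total degree of φ is at most n! times the n-dimensional Lebesgue volume of the convex hull of S in ℝⁿ. -/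
open Pointwise

/-!
Put the parameterization over the common denominator `g = ∏ Qᵢ`, with numerators `fᵢ`, and let `K`
be the convex hull of `S`, so that `g` and all `fᵢ` have exponents in `K`. If `p` has degree at most
`k`, then `g ^ k * p(f / g)` is a polynomial with exponents in `k • K`. Hence the polynomials of
degree at most `k` modulo the relations among the `fᵢ / g` form a space of dimension at most the
number of lattice points of `k • K`, which is asymptotic to `vol(K) * k ^ n`. The relations of
degree at most `k` are multiples of `φ` by polynomials of degree at most `k - deg φ`, so the
dimension of this quotient is at least `C(k + n + 1, n + 1) - C(k - deg φ + n + 1, n + 1)`, which is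
at least `deg φ * (k - deg φ) ^ n / n!`. Dividing by `k ^ n` and letting `k → ∞` gives the bound.
-/

section Counting

open MvPolynomial Nat

theorem pow_le_factorial_mul_choose_add (k n : ℕ) : k ^ n ≤ n ! * (k + n).choose n :=
  calc k ^ n ≤ (k + 1) ^ n := Nat.pow_le_pow_left k.le_succ n
    _ ≤ (k + 1).ascFactorial n := Nat.pow_succ_le_ascFactorial (k + 1) n
    _ = n ! * (k + n).choose n := Nat.ascFactorial_eq_factorial_mul_choose k n

theorem mul_pow_add_factorial_mul_choose_le (n e d : ℕ) :
    d * e ^ n + n ! * (e + (n + 1)).choose (n + 1) ≤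
      n ! * (e + d + (n + 1)).choose (n + 1) := by
  induction d with
  | zero => simp
  | succ d ih =>
    have increment : e ^ n ≤ n ! * (e + d + 1 + n).choose n :=
      (Nat.pow_le_pow_left (by lia) n).trans (pow_le_factorial_mul_choose_add (e + d + 1) n)
    have pascal : (e + (d + 1) + (n + 1)).choose (n + 1) =
        (e + d + 1 + n).choose n + (e + d + (n + 1)).choose (n + 1) := by
      grind [Nat.choose_succ_succ']
    rw [pascal, add_mul, mul_add]
    lia

theorem finrank_restrictTotalDegree (σ R : Type*) [Fintype σ] [CommSemiring R]
    [StrongRankCondition R] (k : ℕ) : Module.finrank R (restrictTotalDegree σ R k) =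
      (k + Fintype.card σ).choose (Fintype.card σ) := by
  classical
  have exponents : {m : σ →₀ ℕ | (m.sum fun _ e => e) ≤ k} =
      ↑((Finset.range (k + 1)).biUnion (Finset.univ : Finset σ).finsuppAntidiag) := by
    ext m
    simp [Finsupp.sum_fintype]
  have disjoint : (Finset.range (k + 1) : Set ℕ).PairwiseDisjoint
      (Finset.univ : Finset σ).finsuppAntidiag := fun i _ j _ hij =>
    Finset.disjoint_left.2 fun m hi hj =>
      hij ((Finset.mem_finsuppAntidiag.1 hi).1.symm.trans (Finset.mem_finsuppAntidiag.1 hj).1)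
  rw [restrictTotalDegree, Module.finrank_eq_nat_card_basis (basisRestrictSupport R _), exponents,
    Nat.card_coe_set_eq, Set.ncard_coe_finset, Finset.card_biUnion disjoint]
  simp only [Finset.card_finsuppAntidiag_nat_eq_multichoose, Finset.card_univ,
    Nat.sum_range_multichoose]

end Counting

section RankNullity

open MvPolynomial

variable {σ 𝕜 : Type*} [Field 𝕜]

-- For `k < φ.totalDegree` the truncated `k - φ.totalDegree` is `0`: the bound is true, not sharp.
theorem finrank_restrictTotalDegree_le_finrank_map_add [Finite σ] {M : Type*} [AddCommGroup M]
    [Module 𝕜 M] (ψ : MvPolynomial σ 𝕜 →ₗ[𝕜] M) {φ : MvPolynomial σ 𝕜} (hφ : φ ≠ 0)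
    (hψ : ∀ p, ψ p = 0 → φ ∣ p) (k : ℕ) :
    Module.finrank 𝕜 (restrictTotalDegree σ 𝕜 k) ≤
      Module.finrank 𝕜 ((restrictTotalDegree σ 𝕜 k).map ψ) +
        Module.finrank 𝕜 (restrictTotalDegree σ 𝕜 (k - φ.totalDegree)) := by
  set V := restrictTotalDegree σ 𝕜 k
  set W := restrictTotalDegree σ 𝕜 (k - φ.totalDegree)
  have ker_le : (LinearMap.ker (ψ.domRestrict V)).map V.subtype ≤
      W.map (LinearMap.mulLeft 𝕜 φ) := by
    rintro _ ⟨⟨p, hpk⟩, hp, rfl⟩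
    obtain ⟨q, rfl⟩ := hψ p hp
    refine ⟨q, (mem_restrictTotalDegree _ _ _).2 ?_, rfl⟩
    rcases eq_or_ne q 0 with rfl | hq
    · simp
    · rw [mem_restrictTotalDegree, totalDegree_mul_of_isDomain hφ hq] at hpk
      exact Nat.le_sub_of_add_le' hpk
  rw [← LinearMap.finrank_range_add_finrank_ker (ψ.domRestrict V), LinearMap.range_domRestrict,
    ← Submodule.finrank_map_subtype_eq V (LinearMap.ker _)]
  gcongr
  exact (Submodule.finrank_mono ker_le).trans (Submodule.finrank_map_le _ _)

end RankNullity

section Homogenization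

open MvPolynomial

variable {σ R B L : Type*} [CommSemiring R] [CommSemiring B] [Algebra R B] [CommSemiring L]
  [Algebra R L] [Algebra B L] [IsScalarTower R B L] {𝒜 : ℕ → Submodule R B} [SetLike.GradedMonoid 𝒜]
  {g : B} {f : σ → B} {x : σ → L}

theorem pow_mul_aeval_mem_map (hg : g ∈ 𝒜 1) (hf : ∀ i, f i ∈ 𝒜 1)
    (hx : ∀ i, algebraMap B L (f i) = algebraMap B L g * x i) {k : ℕ} {p : MvPolynomial σ R}
    (hp : p.totalDegree ≤ k) :
    algebraMap B L g ^ k * aeval x p ∈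
      (𝒜 k).map (IsScalarTower.toAlgHom R B L).toLinearMap := by
  rw [aeval_def, eval₂_eq, Finset.mul_sum]
  refine Submodule.sum_mem _ fun m hm => ?_
  have hmk : ∑ i ∈ m.support, m i ≤ k := (le_totalDegree hm).trans hp
  have homogenized : (∏ i ∈ m.support, f i ^ m i) * g ^ (k - ∑ i ∈ m.support, m i) ∈ 𝒜 k := by
    have product_mem := SetLike.mul_mem_graded
      (SetLike.prod_pow_mem_graded 𝒜 (fun _ => 1) f m fun i (_ : i ∈ m.support) => hf i)
      (SetLike.pow_mem_graded (k - ∑ i ∈ m.support, m i) hg)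
    simpa only [smul_eq_mul, mul_one, Nat.add_sub_cancel' hmk] using product_mem
  refine ⟨p.coeff m • _, Submodule.smul_mem _ _ homogenized, ?_⟩
  simp only [AlgHom.toLinearMap_apply, IsScalarTower.coe_toAlgHom', map_mul, map_prod, map_pow, hx,
    mul_pow, Finset.prod_mul_distrib, Finset.prod_pow_eq_pow_sum, Algebra.smul_def,
    ← IsScalarTower.algebraMap_apply R B L]
  rw [← pow_mul_pow_sub (algebraMap B L g) hmk]
  ring

end Homogenization

section DegreeGrowth

open MvPolynomial

variable {σ 𝕜 B L : Type*} [Field 𝕜] [CommRing B] [Algebra 𝕜 B] [CommRing L] [IsDomain L]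
  [Algebra 𝕜 L] [Algebra B L] [FaithfulSMul B L] [IsScalarTower 𝕜 B L]
  {𝒜 : ℕ → Submodule 𝕜 B} [SetLike.GradedMonoid 𝒜] {g : B} {f : σ → B} {x : σ → L}

theorem finrank_map_aeval_le_finrank_graded (hg₀ : g ≠ 0) (hg : g ∈ 𝒜 1) (hf : ∀ i, f i ∈ 𝒜 1)
    (hx : ∀ i, algebraMap B L (f i) = algebraMap B L g * x i) (k : ℕ) [Module.Finite 𝕜 (𝒜 k)] :
    Module.finrank 𝕜 ((restrictTotalDegree σ 𝕜 k).map (aeval x).toLinearMap) ≤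
      Module.finrank 𝕜 (𝒜 k) := by
  set scale : L →ₗ[𝕜] L := LinearMap.mulLeft 𝕜 (algebraMap B L g ^ k)
  have scale_injective : Function.Injective scale :=
    mul_right_injective₀ (pow_ne_zero k ((FaithfulSMul.algebraMap_eq_zero_iff B L).not.2 hg₀))
  have scaled_le : ((restrictTotalDegree σ 𝕜 k).map (aeval x).toLinearMap).map scale ≤
      (𝒜 k).map (IsScalarTower.toAlgHom 𝕜 B L).toLinearMap := by
    rintro _ ⟨_, ⟨p, hp, rfl⟩, rfl⟩
    exact pow_mul_aeval_mem_map hg hf hx ((mem_restrictTotalDegree _ _ _).1 hp)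
  rw [← (Submodule.equivMapOfInjective scale scale_injective _).symm.finrank_eq]
  exact (Submodule.finrank_mono scaled_le).trans (Submodule.finrank_map_le _ _)

theorem mul_pow_le_factorial_mul_finrank_graded [Fintype σ] {n : ℕ}
    (hσ : Fintype.card σ = n + 1) (hg₀ : g ≠ 0) (hg : g ∈ 𝒜 1) (hf : ∀ i, f i ∈ 𝒜 1)
    (hx : ∀ i, algebraMap B L (f i) = algebraMap B L g * x i) {φ : MvPolynomial σ 𝕜} (hφ : φ ≠ 0)
    (hdvd : ∀ p, aeval x p = 0 → φ ∣ p) {k : ℕ} (hk : φ.totalDegree ≤ k)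
    [Module.Finite 𝕜 (𝒜 k)] :
    φ.totalDegree * (k - φ.totalDegree) ^ n ≤ n.factorial * Module.finrank 𝕜 (𝒜 k) := by
  have hilbert : (k + (n + 1)).choose (n + 1) ≤
      Module.finrank 𝕜 (𝒜 k) + (k - φ.totalDegree + (n + 1)).choose (n + 1) := by
    rw [← hσ, ← finrank_restrictTotalDegree σ 𝕜, ← finrank_restrictTotalDegree σ 𝕜]
    exact (finrank_restrictTotalDegree_le_finrank_map_add (aeval x).toLinearMap hφ hdvd k).trans
      (Nat.add_le_add_right (finrank_map_aeval_le_finrank_graded hg₀ hg hf hx k) _)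
  have growth := mul_pow_add_factorial_mul_choose_le n (k - φ.totalDegree) φ.totalDegree
  rw [Nat.sub_add_cancel hk] at growth
  refine Nat.le_of_add_le_add_right (growth.trans ?_)
  rw [← mul_add]
  exact Nat.mul_le_mul_left _ hilbert

end DegreeGrowth

section Exponents

open MvPolynomial

variable {τ : Type*}

/-- The embedding of exponent vectors into the real vector space in which Newton polytopes live. -/
def exponentVector : (τ →₀ ℕ) →+ (τ → ℝ) where
  toFun d i := d i
  map_zero' := by ext; simp
  map_add' d e := by ext; simp

theorem exponentVector_injective : Function.Injective (exponentVector (τ := τ)) := fun d e h => by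
  ext i
  exact Nat.cast_injective (congrFun h i)

variable (R : Type*) [CommSemiring R]

/-- The module of polynomials whose exponents lie in a region `K` of real space. For convex `K`
the modules attached to the dilates `k • K` are the graded pieces in which the substitution of a
parameterization into polynomials of degree at most `k` lands, once denominators are cleared. -/
noncomputable def supportedIn (K : Set (τ → ℝ)) : Submodule R (MvPolynomial τ R) :=
  restrictSupport R (exponentVector ⁻¹' K)

variable {R}

/-- The support of a polynomial as a set of points of real space, whose convex hull is the Newton
polytope; it extends `suppSet` to arbitrary coefficients and variables. -/
def realSupport (p : MvPolynomial τ R) : Set (τ → ℝ) :=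
  exponentVector '' p.support

theorem suppSet_eq_realSupport (n : ℕ) : suppSet n = realSupport := rfl

theorem mem_supportedIn {K : Set (τ → ℝ)} {p : MvPolynomial τ R} :
    p ∈ supportedIn R K ↔ realSupport p ⊆ K :=
  Set.image_subset_iff.symm

theorem mem_supportedIn_realSupport (p : MvPolynomial τ R) : p ∈ supportedIn R (realSupport p) :=
  mem_supportedIn.2 subset_rfl

theorem supportedIn_mono {K L : Set (τ → ℝ)} (h : K ⊆ L) : supportedIn R K ≤ supportedIn R L :=
  restrictSupport_mono R (Set.preimage_mono h)

theorem realSupport_finite (p : MvPolynomial τ R) : (realSupport p).Finite :=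
  p.support.finite_toSet.image _

theorem realSupport_nonempty {p : MvPolynomial τ R} (hp : p ≠ 0) : (realSupport p).Nonempty :=
  (Finset.coe_nonempty.2 (support_nonempty.2 hp)).image _

instance supportedIn.gradedMonoid :
    SetLike.GradedMonoid (supportedIn R : Set (τ → ℝ) → Submodule R (MvPolynomial τ R)) where
  one_mem := by
    have zero_mem : (0 : Set (τ →₀ ℕ)) ⊆ exponentVector ⁻¹' (0 : Set (τ → ℝ)) := by simp
    refine restrictSupport_mono R zero_mem ?_
    rw [restrictSupport_zero]
    exact Submodule.one_le.1 le_rfl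
  mul_mem K L p q hp hq := by
    refine restrictSupport_mono R (Set.preimage_add_preimage_subset exponentVector) ?_
    rw [restrictSupport_add]
    exact Submodule.mul_mem_mul hp hq

theorem gradedMonoid_supportedIn_smul {K : Set (τ → ℝ)} (hK : Convex ℝ K) (hne : K.Nonempty) :
    SetLike.GradedMonoid fun k : ℕ => supportedIn R ((k : ℝ) • K) where
  one_mem := by
    rw [Nat.cast_zero, Set.zero_smul_set hne]
    exact SetLike.one_mem_graded (supportedIn R)
  mul_mem k l p q hp hq := by
    rw [Nat.cast_add, hK.add_smul k.cast_nonneg l.cast_nonneg]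
    exact SetLike.mul_mem_graded hp hq

end Exponents

section LatticePoints

variable {τ : Type*} [Finite τ]

theorem exponentVector_mem_span (d : τ →₀ ℕ) :
    exponentVector d ∈ Submodule.span ℤ (Set.range (Pi.basisFun ℝ τ)) :=
  (Module.Basis.mem_span_iff_repr_mem ℤ _ _).2 fun i => ⟨d i, by simp [exponentVector]⟩

theorem finite_preimage_exponentVector {K : Set (τ → ℝ)} (hK : Bornology.IsBounded K) :
    (exponentVector ⁻¹' K).Finite :=
  have := Fintype.ofFinite τ
  ((ZSpan.setFinite_inter (Pi.basisFun ℝ τ) hK).preimage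
    exponentVector_injective.injOn).subset fun d hd => ⟨hd, exponentVector_mem_span d⟩

theorem ncard_preimage_exponentVector_smul_le {K : Set (τ → ℝ)} (hK : Bornology.IsBounded K)
    {r : ℝ} (hr : r ≠ 0) :
    (exponentVector ⁻¹' (r • K)).ncard ≤
      Nat.card ↑(K ∩ r⁻¹ • (Submodule.span ℤ (Set.range (Pi.basisFun ℝ τ)) : Set (τ → ℝ))) := by
  have := Fintype.ofFinite τ
  set Λ : Set (τ → ℝ) := ↑(Submodule.span ℤ (Set.range (Pi.basisFun ℝ τ)))
  have rescale : K ∩ r⁻¹ • Λ = r⁻¹ • (r • K ∩ Λ) := by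
    rw [Set.smul_set_inter₀ (inv_ne_zero hr), inv_smul_smul₀ hr]
  calc (exponentVector ⁻¹' (r • K)).ncard
    _ ≤ (r • K ∩ Λ).ncard := Set.ncard_le_ncard_of_injOn exponentVector
        (fun d hd => ⟨hd, exponentVector_mem_span d⟩) exponentVector_injective.injOn
        (ZSpan.setFinite_inter _ (hK.smul₀ r))
    _ = (r⁻¹ • (r • K ∩ Λ)).ncard :=
        (Set.ncard_image_of_injective _ (smul_right_injective _ (inv_ne_zero hr))).symm
    _ = Nat.card ↑(K ∩ r⁻¹ • Λ) := by rw [rescale, Nat.card_coe_set_eq]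

variable (R : Type*) [CommSemiring R]

theorem finite_supportedIn {K : Set (τ → ℝ)} (hK : Bornology.IsBounded K) :
    Module.Finite R (supportedIn R K) :=
  have := (finite_preimage_exponentVector hK).to_subtype
  Module.Finite.of_basis (MvPolynomial.basisRestrictSupport R (exponentVector ⁻¹' K))

theorem finrank_supportedIn_smul_le [StrongRankCondition R] {K : Set (τ → ℝ)}
    (hK : Bornology.IsBounded K) {r : ℝ} (hr : r ≠ 0) :
    Module.finrank R (supportedIn R (r • K)) ≤
      Nat.card ↑(K ∩ r⁻¹ • (Submodule.span ℤ (Set.range (Pi.basisFun ℝ τ)) : Set (τ → ℝ))) :=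
  (Module.finrank_eq_nat_card_basis
    (MvPolynomial.basisRestrictSupport R (exponentVector ⁻¹' (r • K)))).trans_le
      (ncard_preimage_exponentVector_smul_le hK hr)

end LatticePoints

section DegreeBound

open MvPolynomial Filter Topology MeasureTheory

theorem le_of_tendsto_div_pow {a s v : ℝ} {n : ℕ} {u : ℕ → ℝ}
    (hu : Tendsto (fun k : ℕ => u k / k ^ n) atTop (𝓝 v))
    (h : ∀ᶠ k : ℕ in atTop, a * (k - s) ^ n ≤ u k) : a ≤ v := by
  have shifted : Tendsto (fun k : ℕ => a * (1 - s / k) ^ n) atTop (𝓝 a) := by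
    simpa using
      (((tendsto_const_div_atTop_nhds_zero_nat s).const_sub 1).pow n).const_mul a
  refine le_of_tendsto_of_tendsto shifted hu ?_
  filter_upwards [h, eventually_gt_atTop 0] with k hk k_pos
  have k_pos' : (0 : ℝ) < k := Nat.cast_pos.2 k_pos
  rw [one_sub_div k_pos'.ne', div_pow, ← mul_div_assoc]
  gcongr

variable {σ τ 𝕜 L : Type*} [Fintype σ] [Fintype τ] [Field 𝕜] [Field L]
  [Algebra 𝕜 L] [Algebra (MvPolynomial τ 𝕜) L] [FaithfulSMul (MvPolynomial τ 𝕜) L]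
  [IsScalarTower 𝕜 (MvPolynomial τ 𝕜) L]

theorem totalDegree_le_factorial_mul_volume (hσ : Fintype.card σ = Fintype.card τ + 1)
    {K : Set (τ → ℝ)} (hK : Convex ℝ K) (hKc : IsCompact K) {g : MvPolynomial τ 𝕜}
    {f : σ → MvPolynomial τ 𝕜} (hg₀ : g ≠ 0) (hg : g ∈ supportedIn 𝕜 K)
    (hf : ∀ i, f i ∈ supportedIn 𝕜 K) {x : σ → L}
    (hx : ∀ i, algebraMap _ L (f i) = algebraMap _ L g * x i) {φ : MvPolynomial σ 𝕜} (hφ : φ ≠ 0)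
    (hdvd : ∀ p, aeval x p = 0 → φ ∣ p) :
    (φ.totalDegree : ENNReal) ≤ (Fintype.card τ).factorial * volume K := by
  have := gradedMonoid_supportedIn_smul (R := 𝕜) hK
    ((realSupport_nonempty hg₀).mono (mem_supportedIn.1 hg))
  have ehrhart := tendsto_card_div_pow_atTop_volume K hKc.isBounded
    hKc.measurableSet (hK.addHaar_frontier volume)
  suffices (φ.totalDegree : ℝ) ≤ (Fintype.card τ).factorial * volume.real K by
    rw [← ENNReal.ofReal_natCast, ← ENNReal.ofReal_natCast (Fintype.card τ).factorial,
      ← ofReal_measureReal hKc.measure_ne_top, ← ENNReal.ofReal_mul (Nat.cast_nonneg _)]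
    exact ENNReal.ofReal_le_ofReal this
  refine le_of_tendsto_div_pow (s := φ.totalDegree) (n := Fintype.card τ)
    ((ehrhart.const_mul _).congr fun k => (mul_div_assoc _ _ _).symm) ?_
  filter_upwards [eventually_ge_atTop φ.totalDegree, eventually_ne_atTop 0] with k hk k_ne
  have := finite_supportedIn 𝕜 (hKc.isBounded.smul₀ (k : ℝ))
  have bound := (mul_pow_le_factorial_mul_finrank_graded
    (𝒜 := fun k : ℕ => supportedIn 𝕜 ((k : ℝ) • K)) hσ hg₀ (by simpa using hg)
    (by simpa using hf) hx hφ hdvd hk).trans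
      (Nat.mul_le_mul_left _
        (finrank_supportedIn_smul_le 𝕜 hKc.isBounded (Nat.cast_ne_zero.2 k_ne)))
  rw [← Nat.cast_sub hk]
  exact_mod_cast bound

theorem totalDegree_implicit_le_different_denominators_general [DecidableEq σ]
    (hσ : Fintype.card σ = Fintype.card τ + 1) {P Q : σ → MvPolynomial τ 𝕜} (hQ : ∀ i, Q i ≠ 0)
    {φ : MvPolynomial σ 𝕜} (hφ : φ ≠ 0)
    (hker : RingHom.ker (aeval (R := 𝕜) fun i => algebraMap _ L (P i) / algebraMap _ L (Q i)) =
      Ideal.span {φ}) :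
    (φ.totalDegree : ENNReal) ≤ (Fintype.card τ).factorial *
      volume (convexHull ℝ
        ((⋃ i, realSupport (P i) + ∑ j ∈ Finset.univ.erase i, realSupport (Q j)) ∪
          ∑ i, realSupport (Q i))) := by
  set S := (⋃ i, realSupport (P i) + ∑ j ∈ Finset.univ.erase i, realSupport (Q j)) ∪
    ∑ i, realSupport (Q i)
  have finite_sum (s : Finset σ) : (∑ j ∈ s, realSupport (Q j)).Finite :=
    Finset.sum_induction _ Set.Finite (fun _ _ => Set.Finite.add) Set.finite_zero
      fun j _ => realSupport_finite (Q j)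
  have S_finite : S.Finite :=
    (Set.finite_iUnion fun i => (realSupport_finite (P i)).add (finite_sum _)).union (finite_sum _)
  have prod_mem (s : Finset σ) : ∏ j ∈ s, Q j ∈ supportedIn 𝕜 (∑ j ∈ s, realSupport (Q j)) :=
    SetLike.prod_mem_graded _ _ _ fun j _ => mem_supportedIn_realSupport (Q j)
  have denominator_mem : ∏ j, Q j ∈ supportedIn 𝕜 (convexHull ℝ S) :=
    supportedIn_mono (Set.subset_union_right.trans (subset_convexHull ℝ S)) (prod_mem _)
  have numerator_mem (i : σ) :
      P i * ∏ j ∈ Finset.univ.erase i, Q j ∈ supportedIn 𝕜 (convexHull ℝ S) :=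
    supportedIn_mono (((Set.subset_iUnion _ i).trans Set.subset_union_left).trans
      (subset_convexHull ℝ S))
        (SetLike.mul_mem_graded (mem_supportedIn_realSupport (P i)) (prod_mem _))
  refine totalDegree_le_factorial_mul_volume hσ (convex_convexHull ℝ S)
    (S_finite.isCompact_convexHull ℝ) (Finset.prod_ne_zero_iff.2 fun j _ => hQ j)
    denominator_mem numerator_mem (fun i => ?_) hφ
    fun p hp => Ideal.mem_span_singleton.1 (hker ▸ hp)
  have Qi_ne_zero : algebraMap _ L (Q i) ≠ 0 :=
    (FaithfulSMul.algebraMap_eq_zero_iff _ L).not.2 (hQ i)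
  rw [← Finset.mul_prod_erase _ _ (Finset.mem_univ i), map_mul, map_mul]
  field_simp

end DegreeBound

/-- Degree bound for the implicit equation of a rational parameterization
`x_i = P_i / Q_i` with different denominators: the total degree of `φ` is at most `n!`
times the volume of the convex hull of
`S = ⋃ᵢ (supp Pᵢ + Σ_{j ≠ i} supp Q_j) ∪ (Σᵢ supp Qᵢ)` (Minkowski sums). -/
theorem totalDegree_implicit_le_different_denominators (n : ℕ) (hn : 1 ≤ n)
    (P Q : Fin (n + 1) → MvPolynomial (Fin n) ℂ) (hQ : ∀ i, Q i ≠ 0)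
    (φ : MvPolynomial (Fin (n + 1)) ℂ) (hφ : φ ≠ 0)
    (hker : RingHom.ker (MvPolynomial.aeval (R := ℂ)
        (fun i : Fin (n + 1) =>
          algebraMap (MvPolynomial (Fin n) ℂ) (FractionRing (MvPolynomial (Fin n) ℂ)) (P i) /
          algebraMap (MvPolynomial (Fin n) ℂ) (FractionRing (MvPolynomial (Fin n) ℂ)) (Q i)) :
        MvPolynomial (Fin (n + 1)) ℂ →+* FractionRing (MvPolynomial (Fin n) ℂ)) =
      Ideal.span {φ}) :
    (φ.totalDegree : ENNReal) ≤ (n.factorial : ENNReal) *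
      MeasureTheory.volume (convexHull ℝ
        ((⋃ i, suppSet n (P i) + ∑ j ∈ Finset.univ.erase i, suppSet n (Q j)) ∪
          ∑ i : Fin (n + 1), suppSet n (Q i))) := by
  simpa only [Fintype.card_fin, suppSet_eq_realSupport] using
    totalDegree_implicit_le_different_denominators_general (by simp) hQ hφ hker
end

section
/- Let m_i ≤ l_i and m_j ≤ l_j be natural numbers, and in ℝ² let T_i be the convex hull of {(0,1), (m_i,0), (l_i,0)} and T_j the convex hull of {(0,1), (m_j,0), (l_j,0)}. Then vol(T_i + T_j) − vol(T_i) − vol(T_j) = max(l_i, l_j) − min(m_i, m_j), where T_i + T_j = {p + q : p ∈ T_i, q ∈ T_j} is the Minkowski sum and vol denotes two-dimensional Lebesgue measure. (Equivalently: the mixed volume of the Newton polygons of f_i = x_i r − P_i(t) and f_j = x_j r − P_j(t), for univariate polynomials P_i, P_j with supports having minimum m_i, m_j and maximum l_i, l_j, equals the length of the convex hull of the union of the supports of P_i and P_j.) -/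
open Pointwise

/-- The Newton polygon of `f = x r - P(t)` where `P` is a univariate polynomial whose
support has minimum `m` and maximum `l`: the triangle with vertices `(0,1)`, `(m,0)`, `(l,0)`. -/
noncomputable def newtonTriangle (m l : ℕ) : Set (ℝ × ℝ) :=
  convexHull ℝ {((0 : ℝ), (1 : ℝ)), ((m : ℝ), (0 : ℝ)), ((l : ℝ), (0 : ℝ))}

/-! Give two triangles with bases on the axis `y = 0` a common apex at height `1`. The line `y = 1`
cuts their Minkowski sum into a trapezoid, whose lower edge is the sum of the two bases and whose
upper edge is the interval hull `J` of the bases translated by the apex, and a translate of the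
triangle with base `J` and the same apex. These have areas `(|I₁| + |I₂| + |J|) / 2` and `|J| / 2`,
where `I₁` and `I₂` are the bases, and the triangles themselves have areas `|I₁| / 2` and
`|I₂| / 2`. -/

open MeasureTheory Set AffineMap

theorem add_mul_min_le_mul_add_mul {R : Type*} [Semiring R] [LinearOrder R] [IsOrderedRing R]
    {p q : R} (hp : 0 ≤ p) (hq : 0 ≤ q) (a b : R) : (p + q) * min a b ≤ p * a + q * b := by
  rw [add_mul]
  gcongr
  exacts [min_le_left a b, min_le_right a b]

theorem mul_add_mul_le_add_mul_max {R : Type*} [Semiring R] [LinearOrder R] [IsOrderedRing R]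
    {p q : R} (hp : 0 ≤ p) (hq : 0 ≤ q) (a b : R) : p * a + q * b ≤ (p + q) * max a b := by
  rw [add_mul]
  gcongr
  exacts [le_max_left a b, le_max_right a b]

theorem volume_prod_setOf_mem_Icc {α : Type*} [MeasurableSpace α] (μ : Measure α) [SFinite μ]
    {s : Set α} (hs : MeasurableSet s) {f g : α → ℝ} (hf : Measurable f) (hg : Measurable g) :
    (volume.prod μ) {p : ℝ × α | p.2 ∈ s ∧ p.1 ∈ Icc (f p.2) (g p.2)} =
      ∫⁻ y in s, ENNReal.ofReal (g y - f y) ∂μ := by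
  have hmeas : MeasurableSet {p : ℝ × α | p.2 ∈ s ∧ p.1 ∈ Icc (f p.2) (g p.2)} :=
    measurable_swap (measurableSet_region_between_cc hf hg hs)
  have slice (y : α) : volume ((·, y) ⁻¹' {p : ℝ × α | p.2 ∈ s ∧ p.1 ∈ Icc (f p.2) (g p.2)}) =
      s.indicator (fun y ↦ ENNReal.ofReal (g y - f y)) y := by
    by_cases hy : y ∈ s <;> simp [hy, ← Real.volume_Icc, Icc_def]
  rw [Measure.prod_apply_symm hmeas, lintegral_congr slice, lintegral_indicator hs]

theorem integral_lineMap (u v : ℝ) : ∫ t in (0 : ℝ)..1, lineMap u v t = (u + v) / 2 := by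
  simp only [lineMap_apply_ring']
  rw [intervalIntegral.integral_add (by simp) (by simp), intervalIntegral.integral_mul_const,
    integral_id, intervalIntegral.integral_const, smul_eq_mul]
  ring

theorem lintegral_ofReal_lineMap {u v : ℝ} (hu : 0 ≤ u) (hv : 0 ≤ v) :
    ∫⁻ t in Icc (0 : ℝ) 1, ENNReal.ofReal (lineMap u v t) = ENNReal.ofReal ((u + v) / 2) := by
  have hcont : Continuous (lineMap u v : ℝ → ℝ) := lineMap_continuous
  have hnonneg : ∀ t ∈ Icc (0 : ℝ) 1, 0 ≤ lineMap u v t := fun t ht ↦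
    (convex_Ici (0 : ℝ)).lineMap_mem hu hv ht
  rw [← ofReal_integral_eq_lintegral_ofReal hcont.continuousOn.integrableOn_Icc
      ((ae_restrict_iff' measurableSet_Icc).2 (.of_forall hnonneg)),
    integral_Icc_eq_integral_Ioc, ← intervalIntegral.integral_of_le zero_le_one, integral_lineMap]

/-- The trapezoid with horizontal edges `[a, b] × {0}` and `[c, d] × {1}`, encoded by its horizontal
slices, whose endpoints interpolate linearly between those of the two edges. -/
def trapezoid (a b c d : ℝ) : Set (ℝ × ℝ) :=
  {p | p.2 ∈ Icc 0 1 ∧ p.1 ∈ Icc (lineMap a c p.2) (lineMap b d p.2)}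

theorem volume_trapezoid {a b c d : ℝ} (hab : a ≤ b) (hcd : c ≤ d) :
    volume (trapezoid a b c d) = ENNReal.ofReal ((b - a + (d - c)) / 2) := by
  have width (t : ℝ) : lineMap b d t - lineMap a c t = lineMap (b - a) (d - c) t := by
    simp only [lineMap_apply_ring]
    ring
  rw [trapezoid, Measure.volume_eq_prod, volume_prod_setOf_mem_Icc volume measurableSet_Icc
    lineMap_continuous.measurable lineMap_continuous.measurable]
  simp only [width, lintegral_ofReal_lineMap (sub_nonneg.2 hab) (sub_nonneg.2 hcd)]

theorem convex_trapezoid (a b c d : ℝ) : Convex ℝ (trapezoid a b c d) := by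
  have hstrip : Convex ℝ {p : ℝ × ℝ | p.2 ∈ Icc 0 1} :=
    (convex_Icc 0 1).linear_preimage (LinearMap.snd ℝ ℝ ℝ)
  have hleft : Convex ℝ {p : ℝ × ℝ | lineMap a c p.2 - p.1 ≤ 0} :=
    (convex_Iic 0).affine_preimage ((lineMap a c).comp AffineMap.snd - AffineMap.fst)
  have hright : Convex ℝ {p : ℝ × ℝ | p.1 - lineMap b d p.2 ≤ 0} :=
    (convex_Iic 0).affine_preimage (AffineMap.fst - (lineMap b d).comp AffineMap.snd)
  simp only [sub_nonpos] at hleft hright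
  exact hstrip.inter (hleft.inter hright)

theorem trapezoid_subset_of_convex {S : Set (ℝ × ℝ)} (hS : Convex ℝ S) {a b c d : ℝ}
    (ha : (a, 0) ∈ S) (hb : (b, 0) ∈ S) (hc : (c, 1) ∈ S) (hd : (d, 1) ∈ S) :
    trapezoid a b c d ⊆ S := by
  rintro ⟨x, y⟩ ⟨hy, hx⟩
  have leg {u v : ℝ} (hu : (u, 0) ∈ S) (hv : (v, 1) ∈ S) : (lineMap u v y, y) ∈ S := by
    simpa [lineMap_apply] using hS.lineMap_mem hu hv hy
  have slice_subset : (·, y) '' Icc (lineMap a c y) (lineMap b d y) ⊆ S := by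
    rw [← segment_eq_Icc (hx.1.trans hx.2), Prod.image_mk_segment_left]
    exact hS.segment_subset (leg ha hc) (leg hb hd)
  exact slice_subset (mem_image_of_mem _ hx)

/-- The triangle with apex `(e, 1)` and base `[a, b] × {0}`. Newton triangles are those with `e = 0`
and natural `a` and `b`. -/
def apexTriangle (e a b : ℝ) : Set (ℝ × ℝ) :=
  convexHull ℝ {(e, 1), (a, 0), (b, 0)}

section apexTriangle

variable (e : ℝ) {a b c d : ℝ}

theorem apex_mem_apexTriangle (a b : ℝ) : (e, 1) ∈ apexTriangle e a b :=
  subset_convexHull ℝ _ (by simp)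

theorem left_mem_apexTriangle (a b : ℝ) : (a, 0) ∈ apexTriangle e a b :=
  subset_convexHull ℝ _ (by simp)

theorem right_mem_apexTriangle (a b : ℝ) : (b, 0) ∈ apexTriangle e a b :=
  subset_convexHull ℝ _ (by simp)

theorem convex_apexTriangle (a b : ℝ) : Convex ℝ (apexTriangle e a b) :=
  convex_convexHull ℝ _

theorem apexTriangle_eq_trapezoid (hab : a ≤ b) : apexTriangle e a b = trapezoid a b e e := by
  apply Subset.antisymm
  · refine convexHull_min ?_ (convex_trapezoid a b e e)
    rintro p (rfl | rfl | rfl) <;> simp [trapezoid, hab]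
  · exact trapezoid_subset_of_convex (convex_apexTriangle e a b) (left_mem_apexTriangle e a b)
      (right_mem_apexTriangle e a b) (apex_mem_apexTriangle e a b) (apex_mem_apexTriangle e a b)

theorem volume_apexTriangle (hab : a ≤ b) :
    volume (apexTriangle e a b) = ENNReal.ofReal ((b - a) / 2) := by
  simp [apexTriangle_eq_trapezoid e hab, volume_trapezoid hab le_rfl]

theorem apexTriangle_add_apexTriangle_subset (hab : a ≤ b) (hcd : c ≤ d) :
    apexTriangle e a b + apexTriangle e c d ⊆
      trapezoid (a + c) (b + d) (e + min a c) (e + max b d) ∪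
        ((e, (1 : ℝ)) +ᵥ apexTriangle e (min a c) (max b d)) := by
  have hbase : min a c ≤ max b d := min_le_of_left_le (le_max_of_le_left hab)
  rw [apexTriangle_eq_trapezoid e hab, apexTriangle_eq_trapezoid e hcd,
    apexTriangle_eq_trapezoid e hbase]
  rintro _ ⟨⟨x, y⟩, ⟨⟨hy₀, hy₁⟩, hax, hxb⟩, ⟨x', y'⟩, ⟨⟨hy'₀, hy'₁⟩, hcx, hxd⟩, rfl⟩
  simp only [lineMap_apply_ring] at hy₀ hy₁ hax hxb hy'₀ hy'₁ hcx hxd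
  rcases le_total (y + y') 1 with h | h
  · left
    have hl := add_mul_min_le_mul_add_mul hy'₀ hy₀ a c
    have hr := mul_add_mul_le_add_mul_max hy'₀ hy₀ b d
    simp only [trapezoid, Prod.mk_add_mk, mem_ofPred_eq, mem_Icc, lineMap_apply_ring]
    refine ⟨⟨?_, ?_⟩, ?_, ?_⟩ <;> linarith
  · right
    have hl := add_mul_min_le_mul_add_mul (sub_nonneg.2 hy₁) (sub_nonneg.2 hy'₁) a c
    have hr := mul_add_mul_le_add_mul_max (sub_nonneg.2 hy₁) (sub_nonneg.2 hy'₁) b d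
    simp only [mem_vadd_set_iff_neg_vadd_mem, trapezoid, Prod.mk_add_mk, Prod.neg_mk, vadd_eq_add,
      mem_ofPred_eq, mem_Icc, lineMap_apply_ring]
    refine ⟨⟨?_, ?_⟩, ?_, ?_⟩ <;> linarith

theorem add_min_mem_apexTriangle_add_apexTriangle (a b c d : ℝ) :
    (e + min a c, 1) ∈ apexTriangle e a b + apexTriangle e c d := by
  rcases min_choice a c with h | h <;> rw [h]
  · simpa [add_comm] using
      add_mem_add (left_mem_apexTriangle e a b) (apex_mem_apexTriangle e c d)
  · simpa using add_mem_add (apex_mem_apexTriangle e a b) (left_mem_apexTriangle e c d)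

theorem add_max_mem_apexTriangle_add_apexTriangle (a b c d : ℝ) :
    (e + max b d, 1) ∈ apexTriangle e a b + apexTriangle e c d := by
  rcases max_choice b d with h | h <;> rw [h]
  · simpa [add_comm] using
      add_mem_add (right_mem_apexTriangle e a b) (apex_mem_apexTriangle e c d)
  · simpa using add_mem_add (apex_mem_apexTriangle e a b) (right_mem_apexTriangle e c d)

theorem union_subset_apexTriangle_add_apexTriangle (a b c d : ℝ) :
    trapezoid (a + c) (b + d) (e + min a c) (e + max b d) ∪
        ((e, (1 : ℝ)) +ᵥ apexTriangle e (min a c) (max b d)) ⊆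
      apexTriangle e a b + apexTriangle e c d := by
  have hconv := (convex_apexTriangle e a b).add (convex_apexTriangle e c d)
  have hmin := add_min_mem_apexTriangle_add_apexTriangle e a b c d
  have hmax := add_max_mem_apexTriangle_add_apexTriangle e a b c d
  apply union_subset
  · refine trapezoid_subset_of_convex hconv ?_ ?_ hmin hmax
    · simpa using add_mem_add (left_mem_apexTriangle e a b) (left_mem_apexTriangle e c d)
    · simpa using add_mem_add (right_mem_apexTriangle e a b) (right_mem_apexTriangle e c d)
  · rw [apexTriangle, ← convexHull_vadd]
    refine convexHull_min ?_ hconv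
    rintro _ ⟨v, rfl | rfl | rfl, rfl⟩
    · exact add_mem_add (apex_mem_apexTriangle e a b) (apex_mem_apexTriangle e c d)
    · simpa using hmin
    · simpa using hmax

theorem apexTriangle_add_apexTriangle (hab : a ≤ b) (hcd : c ≤ d) :
    apexTriangle e a b + apexTriangle e c d =
      trapezoid (a + c) (b + d) (e + min a c) (e + max b d) ∪
        ((e, (1 : ℝ)) +ᵥ apexTriangle e (min a c) (max b d)) :=
  (apexTriangle_add_apexTriangle_subset e hab hcd).antisymm
    (union_subset_apexTriangle_add_apexTriangle e a b c d)

theorem aedisjoint_trapezoid_vadd_trapezoid (a b c d a' b' c' d' x : ℝ) :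
    AEDisjoint volume (trapezoid a b c d) ((x, (1 : ℝ)) +ᵥ trapezoid a' b' c' d') := by
  have hline : volume (univ ×ˢ {1} : Set (ℝ × ℝ)) = 0 := by simp [Measure.volume_eq_prod]
  refine measure_mono_null ?_ hline
  rintro _ ⟨⟨⟨-, h_le⟩, -⟩, p, ⟨⟨h_nonneg, -⟩, -⟩, rfl⟩
  exact ⟨mem_univ _, h_le.antisymm (le_add_of_nonneg_right h_nonneg)⟩

theorem mixedVolume_newtonTriangles_general (hab : a ≤ b) (hcd : c ≤ d) :
    volume (apexTriangle e a b + apexTriangle e c d) =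
      volume (apexTriangle e a b) + volume (apexTriangle e c d) +
        ENNReal.ofReal (max b d - min a c) := by
  have hbase : min a c ≤ max b d := min_le_of_left_le (le_max_of_le_left hab)
  have hdisj : AEDisjoint volume (trapezoid (a + c) (b + d) (e + min a c) (e + max b d))
      ((e, (1 : ℝ)) +ᵥ apexTriangle e (min a c) (max b d)) := by
    rw [apexTriangle_eq_trapezoid e hbase]
    apply aedisjoint_trapezoid_vadd_trapezoid
  rw [apexTriangle_add_apexTriangle e hab hcd,
    measure_union₀ (((convex_apexTriangle _ _ _).vadd _).nullMeasurableSet _) hdisj, measure_vadd,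
    volume_trapezoid (add_le_add hab hcd) (by linarith), volume_apexTriangle e hab,
    volume_apexTriangle e hcd, volume_apexTriangle e hbase]
  repeat rw [← ENNReal.ofReal_add (by linarith) (by linarith)]
  ring_nf

end apexTriangle

/-- The mixed volume `vol(Tᵢ + Tⱼ) - vol(Tᵢ) - vol(Tⱼ)` of the two Newton triangles equals
`max(lᵢ, lⱼ) - min(mᵢ, mⱼ)`, the length of the convex hull of the union of the supports. -/
theorem mixedVolume_newtonTriangles (mi li mj lj : ℕ) (hi : mi ≤ li) (hj : mj ≤ lj) :
    MeasureTheory.volume (newtonTriangle mi li + newtonTriangle mj lj) =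
      MeasureTheory.volume (newtonTriangle mi li) +
      MeasureTheory.volume (newtonTriangle mj lj) +
      ((max li lj - min mi mj : ℕ) : ENNReal) := by
  simpa [newtonTriangle, apexTriangle, ENNReal.ofReal_sub, ← Nat.cast_max, ← Nat.cast_min] using
    mixedVolume_newtonTriangles_general 0 (Nat.cast_le.2 hi) (Nat.cast_le.2 hj)
end

section
/- Fix finite nonempty sets S₀, S₁, S₂ ⊂ ℕ with gcd of the nonzero elements of S₀ ∪ S₁ ∪ S₂ equal to 1 and u := max(max S₀, max S₁, max S₂) ≥ 1, and suppose that for every pair i ≠ j ∈ {0,1,2} one has min(min S_i, min S_j) = 0 and max(max S_i, max S_j) = u (i.e., the convex hull of B_i ∪ B_j equals [0,u] for all pairs, where B_i = [min S_i, max S_i]). Then for generic coefficients, the Newton polygon N(φ) of every irreducible φ ∈ ℂ[x,y] with φ(P₀/Q, P₁/Q) = 0 in ℂ(t) equals the triangle with vertices (0,0), (u,0), (0,u). -/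
open Polynomial

/-- The univariate polynomial with support `S` and coefficient vector `c`. -/
noncomputable def polyOfCoeffs (S : Finset ℕ) (c : {s // s ∈ S} → ℂ) : Polynomial ℂ :=
  ∑ s ∈ S.attach, Polynomial.C (c s) * Polynomial.X ^ (s : ℕ)

/-- The image of that polynomial in the field of rational functions `ℂ(t)`. -/
noncomputable def ratFuncOf (S : Finset ℕ) (c : {s // s ∈ S} → ℂ) : RatFunc ℂ :=
  algebraMap (Polynomial ℂ) (RatFunc ℂ) (polyOfCoeffs S c)

/-- The Newton polygon of a bivariate polynomial: the convex hull in `ℝ²` of its support. -/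
noncomputable def newtonPolygon (φ : MvPolynomial (Fin 2) ℂ) : Set (ℝ × ℝ) :=
  convexHull ℝ ((fun d : Fin 2 →₀ ℕ => ((d 0 : ℝ), (d 1 : ℝ))) '' ↑φ.support)

/-- `φ(P₀/Q, P₁/Q) = 0` in `ℂ(t)`, where `P₀, P₁, Q` have supports `S 0, S 1, S 2`
and coefficient vector `c`. -/
def vanishesSame (S : Fin 3 → Finset ℕ)
    (c : (Σ i : Fin 3, {s // s ∈ S i}) → ℂ) (φ : MvPolynomial (Fin 2) ℂ) : Prop :=
  MvPolynomial.aeval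
    ![ratFuncOf (S 0) (fun s => c ⟨0, s⟩) / ratFuncOf (S 2) (fun s => c ⟨2, s⟩),
      ratFuncOf (S 1) (fun s => c ⟨1, s⟩) / ratFuncOf (S 2) (fun s => c ⟨2, s⟩)] φ = 0

/-!
Generically each pair among `P₀`, `P₁`, `Q` is coprime with maximal degree `u`. The Bezout matrix
`Bez(P₀ - x Q, P₁ - y Q)` expands to the pencil `Bez(P₀, P₁) + x Bez(P₁, Q) + y Bez(Q, P₀)`, whose
determinant `D` vanishes on the curve and has total degree at most `u`. Its coefficients at `(0,0)`,
`(u,0)` and `(0,u)` are the determinants of the three Bezout matrices, nonzero by coprimality, so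
the Newton polygon of `D` is the triangle.

It remains to see that `D` is associated to `φ`. By the gcd condition, `t = 1` is generically alone
in its fibre, which forces the parametrization to be birational: `y` generates `ℂ(t)` over `ℂ(x)`
and hence has degree `[ℂ(t) : ℂ(x)] = max (deg P₀) (deg Q) = u`. As a polynomial in `y`, `D` has
degree `u` and constant leading coefficient, so up to a unit it is the minimal polynomial of `y`
over `ℂ(x)` and divides the irreducible polynomial `φ`.
-/

section Bezoutian

variable {R R' : Type*} [CommRing R] [CommRing R']

/-- The Bezoutian `(P(X) Q(r) - P(r) Q(X)) / (X - r)`, as a polynomial in `X`. For `r` a second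
indeterminate it is the classical bivariate Bezoutian. -/
noncomputable def bezoutian (P Q : R[X]) (r : R) : R[X] :=
  C (Q.eval r) * (P /ₘ (X - C r)) - C (P.eval r) * (Q /ₘ (X - C r))

lemma X_sub_C_mul_bezoutian (P Q : R[X]) (r : R) :
    (X - C r) * bezoutian P Q r = C (Q.eval r) * P - C (P.eval r) * Q := by
  have hdiv (A : R[X]) : (X - C r) * (A /ₘ (X - C r)) = A - C (A.eval r) := by
    rw [X_sub_C_mul_divByMonic_eq_sub_modByMonic, modByMonic_X_sub_C_eq_C_eval]
  rw [bezoutian, mul_sub, mul_left_comm, hdiv, mul_left_comm, hdiv]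
  ring

lemma bezoutian_map (f : R →+* R') (P Q : R[X]) (r : R) :
    bezoutian (P.map f) (Q.map f) (f r) = (bezoutian P Q r).map f := by
  have hX : X - C (f r) = (X - C r : R[X]).map f := by simp
  simp only [bezoutian, Polynomial.map_sub, Polynomial.map_mul, map_C,
    map_divByMonic f (monic_X_sub_C r), hX, eval_map_apply]

lemma isLinearMap_bezoutian (Q : R[X]) (r : R) : IsLinearMap R fun P => bezoutian P Q r where
  map_add P P' := (monic_X_sub_C r).isRegular.left <| by
    simp only [mul_add, X_sub_C_mul_bezoutian, eval_add, C_add]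
    ring
  map_smul a P := (monic_X_sub_C r).isRegular.left <| by
    simp only [smul_eq_C_mul, mul_left_comm _ (C a), X_sub_C_mul_bezoutian, eval_mul, eval_C, C_mul]
    ring

lemma natDegree_bezoutian_le {P Q : R[X]} {n : ℕ} (hP : P.natDegree ≤ n + 1)
    (hQ : Q.natDegree ≤ n + 1) (r : R) : (bezoutian P Q r).natDegree ≤ n := by
  nontriviality R
  have hdiv {A : R[X]} (hA : A.natDegree ≤ n + 1) : (A /ₘ (X - C r)).natDegree ≤ n := by
    rw [natDegree_divByMonic _ (monic_X_sub_C r), natDegree_X_sub_C]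
    exact Nat.sub_le_of_le_add hA
  exact natDegree_sub_le_of_le ((natDegree_C_mul_le _ _).trans (hdiv hP))
    ((natDegree_C_mul_le _ _).trans (hdiv hQ)) |>.trans_eq (max_self n)

lemma coeff_bezoutian {P Q : R[X]} {n : ℕ} (hP : P.natDegree ≤ n + 1)
    (hQ : Q.natDegree ≤ n + 1) (r : R) :
    (bezoutian P Q r).coeff n = Q.eval r * P.coeff (n + 1) - P.eval r * Q.coeff (n + 1) := by
  have hzero : (bezoutian P Q r).coeff (n + 1) = 0 :=
    coeff_eq_zero_of_natDegree_lt (Nat.lt_succ_of_le (natDegree_bezoutian_le hP hQ r))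
  have hcoeff := congrArg (fun A => A.coeff (n + 1)) (X_sub_C_mul_bezoutian P Q r)
  simpa [sub_mul, coeff_X_mul, hzero] using hcoeff

lemma eval_bezoutian_self (P Q : R[X]) (r : R) :
    (bezoutian P Q r).eval r =
      Q.eval r * P.derivative.eval r - P.eval r * Q.derivative.eval r := by
  have hderiv := congrArg (fun A => (derivative A).eval r) (X_sub_C_mul_bezoutian P Q r)
  simpa using hderiv

lemma bezoutian_pencil_eq_zero {P₀ P₁ Q : R[X]} {r x y : R} (hx : P₀.eval r = x * Q.eval r)
    (hy : P₁.eval r = y * Q.eval r) :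
    bezoutian P₀ P₁ r + C x * bezoutian P₁ Q r + C y * bezoutian Q P₀ r = 0 := by
  simp only [bezoutian, hx, hy, C_mul]
  ring

lemma coeff_iterate_divX (P : R[X]) (k i : ℕ) : (divX^[k] P).coeff i = P.coeff (i + k) := by
  induction k generalizing i with
  | zero => rfl
  | succ k ih => rw [Function.iterate_succ_apply', coeff_divX, ih, add_assoc, add_comm 1 k]

lemma coeff_map_C_divByMonic_X_sub_C_X (P : R[X]) (i : ℕ) :
    (P.map C /ₘ (X - C X)).coeff i = divX^[i + 1] P := by
  nontriviality R
  ext j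
  simp only [coeff_divByMonic_X_sub_C, coeff_map, finsetSum_coeff, coeff_mul_C, coeff_X_pow,
    ite_mul, one_mul, zero_mul, coeff_iterate_divX, natDegree_map_eq_of_injective C_injective]
  rw [Finset.sum_eq_single (j + (i + 1))]
  · rw [if_pos (Nat.add_sub_cancel j (i + 1)).symm]
  · intro k hk hne
    rw [Finset.mem_Icc] at hk
    exact if_neg (by omega)
  · intro hmem
    rw [Finset.mem_Icc, not_and, not_le] at hmem
    rw [coeff_eq_zero_of_natDegree_lt (hmem le_add_self), ite_self]

lemma coeff_bezoutian_X (P Q : R[X]) (i : ℕ) :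
    (bezoutian (P.map C) (Q.map C) X).coeff i = Q * divX^[i + 1] P - P * divX^[i + 1] Q := by
  simp only [bezoutian, coeff_sub, coeff_C_mul, coeff_map_C_divByMonic_X_sub_C_X, eval_map,
    eval₂_C_X]

lemma natDegree_coeff_bezoutian_X_le {P Q : R[X]} {n : ℕ} (hP : P.natDegree ≤ n + 1)
    (hQ : Q.natDegree ≤ n + 1) (i : ℕ) :
    ((bezoutian (P.map C) (Q.map C) X).coeff i).natDegree ≤ n := by
  nontriviality R
  suffices hk : ∀ k, (Q * divX^[k] P - P * divX^[k] Q).natDegree ≤ n by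
    rw [coeff_bezoutian_X]
    exact hk (i + 1)
  intro k
  induction k with
  | zero => simp [mul_comm]
  | succ k ih =>
    set A := Q * divX^[k + 1] P - P * divX^[k + 1] Q
    have hrec : X * A =
        (Q * divX^[k] P - P * divX^[k] Q) - (C (P.coeff k) * Q - C (Q.coeff k) * P) := by
      have hP' := X_mul_divX_add (divX^[k] P)
      have hQ' := X_mul_divX_add (divX^[k] Q)
      rw [← Function.iterate_succ_apply' divX, coeff_iterate_divX, zero_add] at hP' hQ'
      linear_combination Q * hP' - P * hQ'
    have hle : (X * A).natDegree ≤ n + 1 := by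
      rw [hrec]
      refine (natDegree_sub_le_of_le (ih.trans n.le_succ)
        (natDegree_sub_le_of_le ((natDegree_C_mul_le _ _).trans hQ)
          ((natDegree_C_mul_le _ _).trans hP))).trans_eq (by simp)
    obtain hA | hA := eq_or_ne A 0
    · rw [hA, natDegree_zero]
      exact n.zero_le
    · rwa [natDegree_X_mul hA, Nat.add_le_add_iff_right] at hle

lemma map_bezoutian_X_aeval {A : Type*} [CommRing A] [Algebra R A] (P Q : R[X]) (a : A) :
    (bezoutian (P.map C) (Q.map C) X).map (aeval a).toRingHom =
      bezoutian (P.map (algebraMap R A)) (Q.map (algebraMap R A)) a := by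
  have hcomp : (aeval a).toRingHom.comp C = algebraMap R A := by
    ext
    simp
  rw [← bezoutian_map, Polynomial.map_map, Polynomial.map_map, hcomp]
  simp

/-- The `n × n` Bezout matrix: the coefficients of the bivariate Bezoutian. It carries the usual
meaning for polynomials of degree at most `n`. -/
noncomputable def bezoutMatrix (n : ℕ) (P Q : R[X]) : Matrix (Fin n) (Fin n) R :=
  .of fun i j => ((bezoutian (P.map C) (Q.map C) X).coeff i).coeff j

lemma bezoutMatrix_swap (n : ℕ) (P Q : R[X]) : bezoutMatrix n P Q = -bezoutMatrix n Q P := by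
  ext i j
  simp [bezoutMatrix, bezoutian]

lemma bezoutMatrix_map_mulVec_pow {A : Type*} [CommRing A] [Algebra R A] {P Q : R[X]} {n : ℕ}
    (hP : P.natDegree ≤ n + 1) (hQ : Q.natDegree ≤ n + 1) (a : A) (i : Fin (n + 1)) :
    ((bezoutMatrix (n + 1) P Q).map (algebraMap R A)).mulVec (fun j => a ^ (j : ℕ)) i =
      (bezoutian (P.map (algebraMap R A)) (Q.map (algebraMap R A)) a).coeff i := by
  calc _ = aeval a ((bezoutian (P.map C) (Q.map C) X).coeff i) := by
        rw [aeval_eq_sum_range' (Nat.lt_succ_of_le (natDegree_coeff_bezoutian_X_le hP hQ i)),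
          ← Fin.sum_univ_eq_sum_range fun j =>
            ((bezoutian (P.map C) (Q.map C) X).coeff i).coeff j • a ^ j]
        simp [Matrix.mulVec, dotProduct, bezoutMatrix, Algebra.smul_def]
    _ = ((bezoutian (P.map C) (Q.map C) X).map (aeval a).toRingHom).coeff i := by simp
    _ = _ := by rw [map_bezoutian_X_aeval]

end Bezoutian

section BezoutMatrixDet

variable {K : Type*} [Field K] {P Q : K[X]} {n : ℕ}

lemma linearIndependent_iterate_divX (hP : P.natDegree = n + 1) :
    LinearIndependent K fun i : Fin (n + 1) => divX^[i + 1] P := by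
  refine Fintype.linearIndependent_iff.2 fun v hv i => ?_
  induction i using WellFoundedLT.induction with
  | ind i ih =>
    have hcoeff := congrArg (fun A => A.coeff (n - i)) hv
    simp only [finsetSum_coeff, coeff_smul, coeff_iterate_divX, coeff_zero, smul_eq_mul] at hcoeff
    rw [Finset.sum_eq_single_of_mem i (Finset.mem_univ i)] at hcoeff
    · have hi : n - i + (i + 1 : ℕ) = P.natDegree := by omega
      have hP0 : P ≠ 0 := ne_zero_of_natDegree_gt (n := n) (by omega)
      rw [hi, coeff_natDegree, mul_eq_zero] at hcoeff
      exact hcoeff.resolve_right (leadingCoeff_ne_zero.2 hP0)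
    · intro j _ hji
      obtain hlt | hgt := hji.lt_or_gt
      · rw [ih j hlt, zero_mul]
      · rw [coeff_eq_zero_of_natDegree_lt (by omega), mul_zero]

lemma det_bezoutMatrix_ne_zero_of_natDegree_eq (hPQ : IsCoprime P Q)
    (hP : P.natDegree = n + 1) (hQ : Q.natDegree ≤ n + 1) :
    (bezoutMatrix (n + 1) P Q).det ≠ 0 := by
  intro hdet
  obtain ⟨v, hv0, hv⟩ := Matrix.exists_vecMul_eq_zero_iff.2 hdet
  let W (A : K[X]) : K[X] := ∑ i : Fin (n + 1), v i • divX^[i + 1] A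
  have hcomb : Q * W P - P * W Q =
      ∑ i : Fin (n + 1), v i • (bezoutian (P.map C) (Q.map C) X).coeff i := by
    simp only [W, coeff_bezoutian_X, Finset.mul_sum, smul_sub, Finset.sum_sub_distrib,
      mul_smul_comm]
  have hker : Q * W P - P * W Q = 0 := by
    rw [hcomb]
    ext j
    obtain hj | hj := lt_or_ge j (n + 1)
    · simpa [Matrix.vecMul, dotProduct, bezoutMatrix] using congrFun hv ⟨j, hj⟩
    · simp only [finsetSum_coeff, coeff_smul, coeff_zero]
      refine Finset.sum_eq_zero fun i _ => ?_
      rw [coeff_eq_zero_of_natDegree_lt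
        ((natDegree_coeff_bezoutian_X_le hP.le hQ i).trans_lt hj), smul_zero]
  have hdvd : P ∣ W P := hPQ.dvd_of_dvd_mul_left ⟨W Q, sub_eq_zero.1 hker⟩
  have hdeg : (W P).natDegree < P.natDegree := by
    refine hP ▸ Nat.lt_succ_of_le (natDegree_sum_le_of_forall_le _ _ fun i _ => ?_)
    refine (natDegree_smul_le _ _).trans (natDegree_le_iff_coeff_eq_zero.2 fun j hj => ?_)
    rw [coeff_iterate_divX, coeff_eq_zero_of_natDegree_lt (by omega)]
  refine hv0 (funext fun i => ?_)
  exact Fintype.linearIndependent_iff.1 (linearIndependent_iterate_divX hP) v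
    (eq_zero_of_dvd_of_natDegree_lt hdvd hdeg) i

lemma det_bezoutMatrix_ne_zero (hPQ : IsCoprime P Q)
    (hdeg : max P.natDegree Q.natDegree = n + 1) : (bezoutMatrix (n + 1) P Q).det ≠ 0 := by
  obtain ⟨hP, hQ⟩ | ⟨hQ, hP⟩ := max_eq_iff.1 hdeg
  · exact det_bezoutMatrix_ne_zero_of_natDegree_eq hPQ hP (hP ▸ hQ)
  · rw [bezoutMatrix_swap, Matrix.det_neg]
    exact mul_ne_zero (pow_ne_zero _ (neg_ne_zero.2 one_ne_zero))
      (det_bezoutMatrix_ne_zero_of_natDegree_eq hPQ.symm hQ (hQ ▸ hP))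

end BezoutMatrixDet

section PencilDet

variable {R m : Type*} [CommRing R] [Fintype m] [DecidableEq m]

/-- The determinant `det (A + x B + y Γ)` of a linear pencil of matrices, as a polynomial in
`x` and `y`. -/
noncomputable def pencilDet (A B Γ : Matrix m m R) : MvPolynomial (Fin 2) R :=
  (A.map MvPolynomial.C + (MvPolynomial.X 0 : MvPolynomial (Fin 2) R) • B.map MvPolynomial.C +
    (MvPolynomial.X 1 : MvPolynomial (Fin 2) R) • Γ.map MvPolynomial.C).det

lemma aeval_pencilDet {L : Type*} [CommRing L] [Algebra R L] (A B Γ : Matrix m m R) (x y : L) :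
    MvPolynomial.aeval ![x, y] (pencilDet A B Γ) =
      (A.map (algebraMap R L) + x • B.map (algebraMap R L) + y • Γ.map (algebraMap R L)).det := by
  rw [pencilDet, AlgHom.map_det]
  congr 1
  ext i j
  simp

lemma totalDegree_pencilDet_le [Nontrivial R] (A B Γ : Matrix m m R) :
    (pencilDet A B Γ).totalDegree ≤ Fintype.card m := by
  rw [pencilDet, Matrix.det_apply]
  refine MvPolynomial.totalDegree_finsetSum_le fun σ _ => ?_
  refine (MvPolynomial.totalDegree_smul_le _ _).trans ?_
  refine (MvPolynomial.totalDegree_finsetProd _ _).trans ?_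
  refine (Finset.sum_le_card_nsmul _ _ 1 fun i _ => ?_).trans_eq (by simp)
  simp only [Matrix.add_apply, Matrix.map_apply, Matrix.smul_apply, smul_eq_mul]
  refine (MvPolynomial.totalDegree_add _ _).trans (max_le
    ((MvPolynomial.totalDegree_add _ _).trans (max_le ?_ ?_)) ?_)
  · simp
  · exact (MvPolynomial.totalDegree_mul _ _).trans (by simp)
  · exact (MvPolynomial.totalDegree_mul _ _).trans (by simp)

lemma coeff_aeval_single_X {σ : Type*} [DecidableEq σ] (i : σ) (φ : MvPolynomial σ R) (n : ℕ) :
    (MvPolynomial.aeval (Pi.single i X : σ → R[X]) φ).coeff n = φ.coeff (Finsupp.single i n) := by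
  induction φ using MvPolynomial.induction_on' with
  | add p q hp hq => rw [map_add, coeff_add, hp, hq, MvPolynomial.coeff_add]
  | monomial d a =>
    rw [MvPolynomial.aeval_monomial, MvPolynomial.coeff_monomial, ← C_eq_algebraMap, coeff_C_mul]
    by_cases hd : d = Finsupp.single i (d i)
    · have hprod : (d.prod fun j k => (Pi.single i X : σ → R[X]) j ^ k) = X ^ d i := by
        conv_lhs => rw [hd]
        rw [Finsupp.prod_single_index (h := fun j k => (Pi.single i X : σ → R[X]) j ^ k)
          (pow_zero _), Pi.single_eq_same]
      have hiff : d = Finsupp.single i n ↔ n = d i :=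
        ⟨fun h => by rw [h, Finsupp.single_eq_same], fun h => h ▸ hd⟩
      simp only [hprod, coeff_X_pow, mul_ite, mul_one, mul_zero, hiff]
    · obtain ⟨j, hj, hji⟩ : ∃ j, d j ≠ 0 ∧ j ≠ i := by
        contrapose! hd
        ext j
        by_cases hji : j = i
        · rw [hji, Finsupp.single_eq_same]
        · rw [Finsupp.single_eq_of_ne hji]
          exact of_not_not fun hj => hji (hd j hj)
      have hzero : (Pi.single i X : σ → R[X]) j ^ d j = 0 := by
        rw [Pi.single_eq_of_ne hji, zero_pow hj]
      rw [Finsupp.prod, Finset.prod_eq_zero (Finsupp.mem_support_iff.2 hj) hzero, coeff_zero,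
        mul_zero, if_neg]
      rintro rfl
      exact hj (Finsupp.single_eq_of_ne hji)

variable (A B Γ : Matrix m m R)

lemma coeff_zero_pencilDet : (pencilDet A B Γ).coeff 0 = A.det := by
  rw [← MvPolynomial.constantCoeff_eq, pencilDet, RingHom.map_det]
  congr 1
  ext i j
  simp

lemma coeff_single_zero_pencilDet :
    (pencilDet A B Γ).coeff (Finsupp.single 0 (Fintype.card m)) = B.det := by
  have hline : (Pi.single 0 X : Fin 2 → R[X]) = ![X, 0] := by
    ext i; fin_cases i <;> simp
  rw [← coeff_aeval_single_X, hline, aeval_pencilDet, zero_smul, add_zero, add_comm]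
  exact coeff_det_X_add_C_card B A

lemma coeff_single_one_pencilDet :
    (pencilDet A B Γ).coeff (Finsupp.single 1 (Fintype.card m)) = Γ.det := by
  have hline : (Pi.single 1 X : Fin 2 → R[X]) = ![0, X] := by
    ext i; fin_cases i <;> simp
  rw [← coeff_aeval_single_X, hline, aeval_pencilDet, zero_smul, add_zero, add_comm]
  exact coeff_det_X_add_C_card Γ A

lemma equivMvPolynomial_symm_pencilDet :
    (Bivariate.equivMvPolynomial R).symm (pencilDet A B Γ) =
      ((X : R[X][X]) • (Γ.map C).map C + (A.map C + (X : R[X]) • B.map C).map C).det := by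
  rw [pencilDet, AlgEquiv.map_det]
  congr 1
  ext1 i j
  simpa [add_comm] using mul_comm _ _

lemma natDegree_equivMvPolynomial_symm_pencilDet_le :
    ((Bivariate.equivMvPolynomial R).symm (pencilDet A B Γ)).natDegree ≤ Fintype.card m := by
  rw [equivMvPolynomial_symm_pencilDet]
  exact natDegree_det_X_add_C_le _ _

lemma coeff_equivMvPolynomial_symm_pencilDet :
    ((Bivariate.equivMvPolynomial R).symm (pencilDet A B Γ)).coeff (Fintype.card m) =
      C Γ.det := by
  rw [equivMvPolynomial_symm_pencilDet, coeff_det_X_add_C_card, RingHom.map_det]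
  rfl

lemma isUnit_leadingCoeff_equivMvPolynomial_symm_pencilDet [Nontrivial R] (h : IsUnit Γ.det) :
    IsUnit ((Bivariate.equivMvPolynomial R).symm (pencilDet A B Γ)).leadingCoeff := by
  have hcoeff := coeff_equivMvPolynomial_symm_pencilDet A B Γ
  rw [leadingCoeff, (natDegree_equivMvPolynomial_symm_pencilDet_le A B Γ).antisymm, hcoeff]
  · exact isUnit_C.2 h
  · exact le_natDegree_of_ne_zero (hcoeff ▸ C_ne_zero.2 h.ne_zero)

end PencilDet

section NewtonPolygon

lemma mem_convexHull_triangle {a b u : ℝ} (hu : 0 < u) (ha : 0 ≤ a) (hb : 0 ≤ b)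
    (hab : a + b ≤ u) : (a, b) ∈ convexHull ℝ {((0 : ℝ), (0 : ℝ)), (u, 0), (0, u)} := by
  have hmem := (convex_convexHull ℝ {((0 : ℝ), (0 : ℝ)), (u, 0), (0, u)}).sum_mem
    (t := Finset.univ) (w := ![1 - (a + b) / u, a / u, b / u]) (z := ![(0, 0), (u, 0), (0, u)])
    (by
      have hle : (a + b) / u ≤ 1 := (div_le_one hu).2 hab
      simp [Fin.forall_fin_succ, hle, div_nonneg ha hu.le, div_nonneg hb hu.le])
    (by simp only [Fin.sum_univ_three, Matrix.cons_val]; ring)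
    (fun i _ => subset_convexHull ℝ _ (by fin_cases i <;> simp))
  simpa [Fin.sum_univ_three, hu.ne'] using hmem

lemma newtonPolygon_eq_triangle {φ : MvPolynomial (Fin 2) ℂ} {u : ℕ} (hu : 0 < u)
    (hdeg : φ.totalDegree ≤ u) (h0 : φ.coeff 0 ≠ 0) (hx : φ.coeff (Finsupp.single 0 u) ≠ 0)
    (hy : φ.coeff (Finsupp.single 1 u) ≠ 0) :
    newtonPolygon φ =
      convexHull ℝ {((0 : ℝ), (0 : ℝ)), ((u : ℝ), (0 : ℝ)), ((0 : ℝ), (u : ℝ))} := by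
  refine (convexHull_min ?_ (convex_convexHull ℝ _)).antisymm (convexHull_mono ?_)
  · rintro _ ⟨d, hd, rfl⟩
    have hle : d 0 + d 1 ≤ u := by
      simpa [Finsupp.sum_fintype] using (MvPolynomial.le_totalDegree hd).trans hdeg
    exact mem_convexHull_triangle (by exact_mod_cast hu) (by positivity) (by positivity)
      (by exact_mod_cast hle)
  · rintro _ (rfl | rfl | rfl)
    · exact ⟨0, MvPolynomial.mem_support_iff.2 h0, by simp⟩
    · exact ⟨Finsupp.single 0 u, MvPolynomial.mem_support_iff.2 hx, by simp⟩
    · exact ⟨Finsupp.single 1 u, MvPolynomial.mem_support_iff.2 hy, by simp⟩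

end NewtonPolygon

section Resultant

lemma map_coeff_mul_resultant_ne_zero_iff {R K : Type*} [CommRing R] [Field K] (ρ : R →+* K)
    {f g : R[X]} {m : ℕ} (hf : f.natDegree ≤ m) :
    ρ (f.coeff m * resultant f g m g.natDegree) ≠ 0 ↔
      ρ (f.coeff m) ≠ 0 ∧ IsCoprime (f.map ρ) (g.map ρ) := by
  rw [map_mul, mul_ne_zero_iff, ← resultant_map_map]
  refine and_congr_right fun hm => ?_
  have hfm : (f.map ρ).coeff m ≠ 0 := by rwa [coeff_map]
  have hdeg : (f.map ρ).natDegree = m :=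
    (natDegree_map_le.trans hf).antisymm (le_natDegree_of_ne_zero hfm)
  have hf0 : f.map ρ ≠ 0 := fun h => hfm (by rw [h, coeff_zero])
  obtain ⟨k, hk⟩ := Nat.exists_eq_add_of_le (natDegree_map_le (f := ρ) (p := g))
  rw [hk, resultant_add_right_deg _ _ _ _ _ le_rfl, ← hdeg, Ne, mul_eq_zero,
    resultant_eq_zero_iff, hdeg]
  simp [hm, hf0]

lemma isCoprime_map_of_injective {R K L : Type*} [CommRing R] [Field K] [Field L] (ρ : R →+* K)
    {τ : R →+* L} (hτ : Function.Injective τ) {f g : R[X]} {m : ℕ} (hf : f.natDegree ≤ m)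
    (hm : ρ (f.coeff m) ≠ 0) (hfg : IsCoprime (f.map ρ) (g.map ρ)) :
    IsCoprime (f.map τ) (g.map τ) := by
  refine ((map_coeff_mul_resultant_ne_zero_iff τ hf).1 fun h => ?_).2
  rw [map_eq_zero_iff τ hτ] at h
  exact (map_coeff_mul_resultant_ne_zero_iff ρ hf).2 ⟨hm, hfg⟩ (by rw [h, map_zero])

end Resultant

section FunctionField

open IntermediateField

lemma dvd_of_natDegree_le_natDegree_minpoly {R F L : Type*} [CommRing R] [Field F] [Field L]
    [Algebra F L] {f : R →+* F} (hf : Function.Injective f) {D p : R[X]} {y : L}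
    (hD : IsUnit D.leadingCoeff) (hDy : aeval y (D.map f) = 0)
    (hdeg : D.natDegree ≤ (minpoly F y).natDegree) (hp : aeval y (p.map f) = 0) : D ∣ p := by
  set c := hD.unit⁻¹
  have hmonic : (c • D).Monic := monic_of_isUnit_leadingCoeff_inv_smul hD
  have hroot : aeval y ((c • D).map f) = 0 := by
    rw [Units.smul_def, Polynomial.map_smul, map_smul, hDy, smul_zero]
  have hmin : (c • D).map f = minpoly F y := by
    refine minpoly.unique_of_degree_le_degree_minpoly F y (hmonic.map f) hroot ?_
    rw [degree_eq_natDegree (minpoly.ne_zero ⟨_, hmonic.map f, hroot⟩)]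
    exact degree_le_of_natDegree_le
      (natDegree_map_le.trans ((natDegree_smul_le _ _).trans hdeg))
  have hdvd : c • D ∣ p := by
    rw [← map_dvd_map f hf hmonic, hmin]
    exact minpoly.dvd F y hp
  exact dvd_trans ⟨C c, by rw [Units.smul_def, smul_eq_C_mul, mul_comm]⟩ hdvd

variable {K L : Type*} [Field K] [Field L] [Algebra K L]

lemma aeval_equivMvPolynomial_symm_map_gen (x y : L) (φ : MvPolynomial (Fin 2) K) :
    aeval y (((Bivariate.equivMvPolynomial K).symm φ).map
      (aeval (AdjoinSimple.gen K x)).toRingHom) = MvPolynomial.aeval ![x, y] φ := by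
  induction φ using MvPolynomial.induction_on with
  | C a => simp
  | add p q hp hq => simp only [map_add, Polynomial.map_add, hp, hq]
  | mul_X p i hp =>
    simp only [map_mul, Polynomial.map_mul, hp]
    fin_cases i <;> simp

lemma natDegree_minpoly_of_adjoin_eq_top {x y : L} [FiniteDimensional K⟮x⟯ L]
    (htop : K⟮x, y⟯ = ⊤) : (minpoly K⟮x⟯ y).natDegree = Module.finrank K⟮x⟯ L := by
  have htop' : K⟮x⟯⟮y⟯ = ⊤ := by
    rw [← restrictScalars_eq_top_iff (K := K), adjoin_simple_adjoin_simple, htop]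
  rw [← adjoin.finrank (IsIntegral.of_finite _ _), htop', finrank_top']

lemma dvd_of_adjoin_eq_top {x y : L} (hx : Transcendental K x) [FiniteDimensional K⟮x⟯ L]
    (htop : K⟮x, y⟯ = ⊤) {D φ : MvPolynomial (Fin 2) K}
    (hlead : IsUnit ((Bivariate.equivMvPolynomial K).symm D).leadingCoeff)
    (hdeg : ((Bivariate.equivMvPolynomial K).symm D).natDegree ≤ Module.finrank K⟮x⟯ L)
    (hD : MvPolynomial.aeval ![x, y] D = 0) (hφ : MvPolynomial.aeval ![x, y] φ = 0) : D ∣ φ := by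
  have hinj : Function.Injective (aeval (R := K) (AdjoinSimple.gen K x)).toRingHom := by
    refine transcendental_iff_injective.1 fun h => hx ?_
    simpa using h.algebraMap (A := L)
  rw [← map_dvd_iff (Bivariate.equivMvPolynomial K).symm]
  refine dvd_of_natDegree_le_natDegree_minpoly (y := y) hinj hlead ?_ ?_ ?_
  · rw [aeval_equivMvPolynomial_symm_map_gen, hD]
  · rwa [natDegree_minpoly_of_adjoin_eq_top htop]
  · rw [aeval_equivMvPolynomial_symm_map_gen, hφ]

lemma finrank_adjoin_div {P Q : K[X]} (h : IsCoprime P Q) (hQ : Q ≠ 0) :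
    Module.finrank K⟮algebraMap K[X] (RatFunc K) P / algebraMap K[X] (RatFunc K) Q⟯ (RatFunc K) =
      max P.natDegree Q.natDegree := by
  rw [RatFunc.finrank_eq_max_natDegree]
  set z := algebraMap K[X] (RatFunc K) P / algebraMap K[X] (RatFunc K) Q with hz
  have hcross : z.num * Q = P * z.denom := (RatFunc.num_mul_eq_mul_denom_iff hQ).2 hz
  have hnum : Associated z.num P := associated_of_dvd_dvd (RatFunc.num_div_dvd P hQ)
    (h.dvd_of_dvd_mul_right ⟨_, hcross⟩)
  have hdenom : Associated z.denom Q := associated_of_dvd_dvd (RatFunc.denom_div_dvd P Q)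
    (h.symm.dvd_of_dvd_mul_left ⟨z.num, by rw [← hcross, mul_comm]⟩)
  rw [natDegree_eq_of_degree_eq (degree_eq_degree_of_associated hnum),
    natDegree_eq_of_degree_eq (degree_eq_degree_of_associated hdenom)]

lemma transcendental_of_finrank_pos {z : RatFunc K} (h : 0 < Module.finrank K⟮z⟯ (RatFunc K)) :
    Transcendental K z := by
  refine z.transcendental_of_ne_C ?_
  rintro ⟨c, rfl⟩
  simp [RatFunc.finrank_eq_max_natDegree] at h

lemma support_eq_of_associated {σ : Type*} {φ ψ : MvPolynomial σ K} (h : Associated φ ψ) :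
    φ.support = ψ.support := by
  obtain ⟨v, rfl⟩ := h
  obtain ⟨c, hc, hv⟩ := MvPolynomial.isUnit_iff_eq_C_of_isReduced.1 v.isUnit
  ext d
  rw [hv, mul_comm, MvPolynomial.mem_support_iff, MvPolynomial.mem_support_iff,
    MvPolynomial.coeff_C_mul, mul_ne_zero_iff_left hc.ne_zero]

end FunctionField

section ImplicitEquation

open IntermediateField

lemma mem_range_algebraMap_of_minpoly_map_dvd {F L : Type*} [Field F] [Field L] [Algebra F L]
    {a : L} {f g : L[X]} (hfg : IsCoprime f g)
    (hf : (minpoly F a).map (algebraMap F L) ∣ (X - C a) * f)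
    (hg : (minpoly F a).map (algebraMap F L) ∣ (X - C a) * g) :
    a ∈ Set.range (algebraMap F L) := by
  have hdvd : (minpoly F a).map (algebraMap F L) ∣ X - C a := by
    obtain ⟨p, q, hpq⟩ := hfg
    have hcomb : X - C a = p * ((X - C a) * f) + q * ((X - C a) * g) := by
      linear_combination -(X - C a) * hpq
    rw [hcomb]
    exact dvd_add (hf.mul_left p) (hg.mul_left q)
  have hle : (minpoly F a).natDegree ≤ 1 := by
    simpa using natDegree_le_of_dvd hdvd (X_sub_C_ne_zero a)
  have hint : IsIntegral F a := by
    by_contra h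
    rw [minpoly.eq_zero h, Polynomial.map_zero, zero_dvd_iff] at hdvd
    exact X_sub_C_ne_zero a hdvd
  exact minpoly.natDegree_eq_one_iff.1 (hle.antisymm (minpoly.natDegree_pos hint))

lemma minpoly_map_dvd_X_sub_C_mul_bezoutian {K F L : Type*} [Field K] [Field F] [Field L]
    [Algebra K F] [Algebra K L] [Algebra F L] [IsScalarTower K F L] {P Q : K[X]} {a : L} {w : F}
    (hw : aeval a P = algebraMap F L w * aeval a Q) :
    (minpoly F a).map (algebraMap F L) ∣
      (X - C a) * bezoutian (P.map (algebraMap K L)) (Q.map (algebraMap K L)) a := by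
  set f : F[X] := P.map (algebraMap K F) - C w * Q.map (algebraMap K F) with hf
  have hroot : aeval a f = 0 := by simp [hf, hw]
  refine (Polynomial.map_dvd _ (minpoly.dvd F a hroot)).trans ⟨C (aeval a Q), ?_⟩
  simp only [X_sub_C_mul_bezoutian, hf, eval_map_algebraMap, hw, C_mul, Polynomial.map_sub,
    Polynomial.map_mul, Polynomial.map_map, map_C, ← IsScalarTower.algebraMap_eq]
  ring

variable {K : Type*} [Field K] {P₀ P₁ Q : K[X]} {n : ℕ}

lemma mem_adjoin_div_of_isCoprime_bezoutian {L : Type*} [Field L] [Algebra K L] {a : L}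
    (ha : Transcendental K a) (hP₀ : P₀.natDegree ≤ n + 1) (hQ : Q.natDegree ≤ n + 1) {r : K}
    (hlead : (bezoutian P₀ Q r).coeff n ≠ 0)
    (hcop : IsCoprime (bezoutian P₀ Q r) (bezoutian P₁ Q r)) :
    a ∈ K⟮aeval a P₀ / aeval a Q, aeval a P₁ / aeval a Q⟯ := by
  set F := K⟮aeval a P₀ / aeval a Q, aeval a P₁ / aeval a Q⟯
  have hQa : aeval a Q ≠ 0 := by
    refine (transcendental_iff.1 ha Q).mt ?_
    rintro rfl
    simp [bezoutian] at hlead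
  have hspec (P : K[X]) :
      (bezoutian (P.map C) (Q.map C) X).map (aeval r).toRingHom = bezoutian P Q r := by
    rw [map_bezoutian_X_aeval, Algebra.algebraMap_self, Polynomial.map_id, Polynomial.map_id]
  have hcop' := isCoprime_map_of_injective (aeval r).toRingHom (τ := (aeval (R := K) a).toRingHom)
    (f := bezoutian (P₀.map C) (Q.map C) X) (g := bezoutian (P₁.map C) (Q.map C) X)
    (transcendental_iff_injective.1 ha)
    (natDegree_bezoutian_le (natDegree_map_le.trans hP₀) (natDegree_map_le.trans hQ) X)
    (by rwa [← coeff_map, hspec]) (by rwa [hspec, hspec])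
  rw [map_bezoutian_X_aeval, map_bezoutian_X_aeval] at hcop'
  have hmem (P : K[X]) (hP : aeval a P / aeval a Q ∈ F) :=
    minpoly_map_dvd_X_sub_C_mul_bezoutian (P := P) (Q := Q) (w := (⟨_, hP⟩ : F))
      (div_mul_cancel₀ _ hQa).symm
  obtain ⟨w, hw⟩ := mem_range_algebraMap_of_minpoly_map_dvd hcop'
    (hmem P₀ (subset_adjoin K _ (Set.mem_insert _ _)))
    (hmem P₁ (subset_adjoin K _ (Set.mem_insert_of_mem _ rfl)))
  exact hw ▸ w.2

lemma adjoin_div_eq_top_of_isCoprime_bezoutian (hP₀ : P₀.natDegree ≤ n + 1)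
    (hQ : Q.natDegree ≤ n + 1) {r : K} (hlead : (bezoutian P₀ Q r).coeff n ≠ 0)
    (hcop : IsCoprime (bezoutian P₀ Q r) (bezoutian P₁ Q r)) :
    K⟮algebraMap K[X] (RatFunc K) P₀ / algebraMap K[X] (RatFunc K) Q,
      algebraMap K[X] (RatFunc K) P₁ / algebraMap K[X] (RatFunc K) Q⟯ = ⊤ := by
  rw [eq_top_iff, ← RatFunc.adjoin_X, adjoin_simple_le_iff]
  simpa only [RatFunc.aeval_X_left_eq_algebraMap] using
    mem_adjoin_div_of_isCoprime_bezoutian RatFunc.transcendental_X hP₀ hQ hlead hcop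

/-- The equation `det (Bez(P₀, P₁) + x Bez(P₁, Q) + y Bez(Q, P₀)) = 0` of the curve
`x = P₀ / Q`, `y = P₁ / Q`, for polynomials of degree at most `n`. The matrix is the Bezout matrix
of `P₀ - x Q` and `P₁ - y Q`, whose determinant is their resultant. -/
noncomputable def implicitEquation (n : ℕ) (P₀ P₁ Q : K[X]) : MvPolynomial (Fin 2) K :=
  pencilDet (bezoutMatrix n P₀ P₁) (bezoutMatrix n P₁ Q) (bezoutMatrix n Q P₀)

lemma aeval_implicitEquation {A : Type*} [CommRing A] [IsDomain A] [Algebra K A]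
    (h₀ : P₀.natDegree ≤ n + 1) (h₁ : P₁.natDegree ≤ n + 1) (h₂ : Q.natDegree ≤ n + 1)
    {a x y : A} (hx : aeval a P₀ = x * aeval a Q) (hy : aeval a P₁ = y * aeval a Q) :
    MvPolynomial.aeval ![x, y] (implicitEquation (n + 1) P₀ P₁ Q) = 0 := by
  rw [implicitEquation, aeval_pencilDet, ← Matrix.exists_mulVec_eq_zero_iff]
  refine ⟨fun j => a ^ (j : ℕ), fun h => one_ne_zero (α := A) (by simpa using congrFun h 0), ?_⟩
  have hpencil := bezoutian_pencil_eq_zero (P₀ := P₀.map (algebraMap K A))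
    (P₁ := P₁.map (algebraMap K A)) (Q := Q.map (algebraMap K A))
    (by simpa only [eval_map_algebraMap] using hx) (by simpa only [eval_map_algebraMap] using hy)
  ext i
  simp only [Matrix.add_mulVec, Matrix.smul_mulVec, Pi.add_apply, Pi.smul_apply, smul_eq_mul,
    bezoutMatrix_map_mulVec_pow, h₀, h₁, h₂, Pi.zero_apply]
  simpa using congrArg (fun f => f.coeff i) hpencil

lemma associated_implicitEquation (h₀ : P₀.natDegree ≤ n + 1) (h₁ : P₁.natDegree ≤ n + 1)
    (hcop : IsCoprime Q P₀) (hdeg : max Q.natDegree P₀.natDegree = n + 1) {x y : RatFunc K}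
    (hx : x = algebraMap K[X] (RatFunc K) P₀ / algebraMap K[X] (RatFunc K) Q)
    (hy : y = algebraMap K[X] (RatFunc K) P₁ / algebraMap K[X] (RatFunc K) Q)
    (htop : K⟮x, y⟯ = ⊤) {φ : MvPolynomial (Fin 2) K} (hφ : Irreducible φ)
    (hvanish : MvPolynomial.aeval ![x, y] φ = 0) :
    Associated φ (implicitEquation (n + 1) P₀ P₁ Q) := by
  have hQ : Q ≠ 0 := by
    rintro rfl
    have hP₀ := natDegree_eq_zero_of_isUnit (isCoprime_zero_left.1 hcop)
    simp [hP₀] at hdeg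
  have hQ' : algebraMap K[X] (RatFunc K) Q ≠ 0 := RatFunc.algebraMap_ne_zero hQ
  have hrank : Module.finrank K⟮x⟯ (RatFunc K) = n + 1 := by
    rw [hx, finrank_adjoin_div hcop.symm hQ, max_comm, hdeg]
  have hpos : 0 < Module.finrank K⟮x⟯ (RatFunc K) := hrank ▸ n.succ_pos
  have : FiniteDimensional K⟮x⟯ (RatFunc K) := Module.finite_of_finrank_pos hpos
  have hD : MvPolynomial.aeval ![x, y] (implicitEquation (n + 1) P₀ P₁ Q) = 0 :=
    aeval_implicitEquation (a := RatFunc.X) h₀ h₁ (hdeg ▸ le_max_left _ _)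
      (by simp only [RatFunc.aeval_X_left_eq_algebraMap, hx, div_mul_cancel₀ _ hQ'])
      (by simp only [RatFunc.aeval_X_left_eq_algebraMap, hy, div_mul_cancel₀ _ hQ'])
  have hdvd : implicitEquation (n + 1) P₀ P₁ Q ∣ φ :=
    dvd_of_adjoin_eq_top (transcendental_of_finrank_pos hpos) htop
      (isUnit_leadingCoeff_equivMvPolynomial_symm_pencilDet _ _ _
        (det_bezoutMatrix_ne_zero hcop hdeg).isUnit)
      ((natDegree_equivMvPolynomial_symm_pencilDet_le _ _ _).trans (by simp [hrank])) hD hvanish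
  have hnonunit : ¬IsUnit (implicitEquation (n + 1) P₀ P₁ Q) := fun h =>
    (h.map (MvPolynomial.aeval ![x, y])).ne_zero hD
  exact (hφ.dvd_iff.1 hdvd).resolve_left hnonunit

lemma newtonPolygon_implicitEquation {P₀ P₁ Q : ℂ[X]} (h₀₁ : IsCoprime P₀ P₁)
    (h₁₂ : IsCoprime P₁ Q) (h₂₀ : IsCoprime Q P₀)
    (d₀₁ : max P₀.natDegree P₁.natDegree = n + 1) (d₁₂ : max P₁.natDegree Q.natDegree = n + 1)
    (d₂₀ : max Q.natDegree P₀.natDegree = n + 1) :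
    newtonPolygon (implicitEquation (n + 1) P₀ P₁ Q) = convexHull ℝ
      {((0 : ℝ), (0 : ℝ)), (((n + 1 : ℕ) : ℝ), (0 : ℝ)), ((0 : ℝ), ((n + 1 : ℕ) : ℝ))} := by
  have hx := coeff_single_zero_pencilDet (bezoutMatrix (n + 1) P₀ P₁) (bezoutMatrix (n + 1) P₁ Q)
    (bezoutMatrix (n + 1) Q P₀)
  have hy := coeff_single_one_pencilDet (bezoutMatrix (n + 1) P₀ P₁) (bezoutMatrix (n + 1) P₁ Q)
    (bezoutMatrix (n + 1) Q P₀)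
  rw [Fintype.card_fin] at hx hy
  refine newtonPolygon_eq_triangle n.succ_pos ?_ ?_ ?_ ?_
  · exact (totalDegree_pencilDet_le _ _ _).trans_eq (Fintype.card_fin _)
  · exact (coeff_zero_pencilDet _ _ _).trans_ne (det_bezoutMatrix_ne_zero h₀₁ d₀₁)
  · exact hx.trans_ne (det_bezoutMatrix_ne_zero h₁₂ d₁₂)
  · exact hy.trans_ne (det_bezoutMatrix_ne_zero h₂₀ d₂₀)

end ImplicitEquation

section ZariskiGeneric

/-- The filter of properties of a vector `c` that hold for generic `c`, that is, wherever some
fixed nonzero polynomial in the entries of `c` does not vanish. -/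
def zariskiGeneric (σ K : Type*) [CommRing K] [IsDomain K] : Filter (σ → K) where
  sets := {s | ∃ G : MvPolynomial σ K, G ≠ 0 ∧ ∀ c, MvPolynomial.eval c G ≠ 0 → c ∈ s}
  univ_sets := ⟨1, one_ne_zero, fun _ _ => trivial⟩
  sets_of_superset := fun ⟨G, hG, h⟩ hst => ⟨G, hG, fun c hc => hst (h c hc)⟩
  inter_sets := fun ⟨G, hG, h⟩ ⟨G', hG', h'⟩ => ⟨G * G', mul_ne_zero hG hG', fun c hc => by
    rw [map_mul, mul_ne_zero_iff] at hc
    exact ⟨h c hc.1, h' c hc.2⟩⟩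

lemma eventually_zariskiGeneric_iff {σ K : Type*} [CommRing K] [IsDomain K] {p : (σ → K) → Prop} :
    (∀ᶠ c in zariskiGeneric σ K, p c) ↔
      ∃ G : MvPolynomial σ K, G ≠ 0 ∧ ∀ c, MvPolynomial.eval c G ≠ 0 → p c :=
  Iff.rfl

instance zariskiGeneric_neBot {σ K : Type*} [CommRing K] [IsDomain K] [Infinite K] :
    (zariskiGeneric σ K).NeBot := by
  refine Filter.neBot_iff.2 fun h => ?_
  obtain ⟨G, hG, hfalse⟩ := eventually_zariskiGeneric_iff.1 (Filter.eventually_false_iff_eq_bot.2 h)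
  exact hG (MvPolynomial.funext fun c => by simpa using hfalse c)

lemma eventually_isCoprime_map {σ K : Type*} [Field K] {f g : (MvPolynomial σ K)[X]} {m : ℕ}
    (hf : f.natDegree ≤ m) {c₀ : σ → K} (hm : (f.map (MvPolynomial.eval c₀)).coeff m ≠ 0)
    (hfg : IsCoprime (f.map (MvPolynomial.eval c₀)) (g.map (MvPolynomial.eval c₀))) :
    ∀ᶠ c in zariskiGeneric σ K, (f.map (MvPolynomial.eval c)).coeff m ≠ 0 ∧
      IsCoprime (f.map (MvPolynomial.eval c)) (g.map (MvPolynomial.eval c)) := by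
  simp only [coeff_map, ← map_coeff_mul_resultant_ne_zero_iff _ hf] at hm ⊢
  refine eventually_zariskiGeneric_iff.2
    ⟨f.coeff m * resultant f g m g.natDegree, fun h => ?_, fun _ => id⟩
  exact (map_coeff_mul_resultant_ne_zero_iff _ hf).2 ⟨hm, hfg⟩ (by rw [h, map_zero])

end ZariskiGeneric

section PolyOfCoeffs

variable {S : Finset ℕ}

lemma map_polyOfCoeffs {M : Type*} [AddCommMonoid M] [Module ℂ M] (ℓ : ℂ[X] →ₗ[ℂ] M)
    (c : {s // s ∈ S} → ℂ) : ℓ (polyOfCoeffs S c) = ∑ s, c s • ℓ (X ^ (s : ℕ)) := by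
  simp [polyOfCoeffs, ← smul_eq_C_mul]

lemma coeff_polyOfCoeffs_of_notMem (c : {s // s ∈ S} → ℂ) {u : ℕ} (hu : u ∉ S) :
    (polyOfCoeffs S c).coeff u = 0 := by
  rw [← lcoeff_apply, map_polyOfCoeffs]
  refine Finset.sum_eq_zero fun s _ => ?_
  rw [lcoeff_apply, coeff_X_pow, if_neg fun h : u = s => hu (h ▸ s.2), smul_zero]

lemma natDegree_polyOfCoeffs_le {u : ℕ} (h : ∀ s ∈ S, s ≤ u) (c : {s // s ∈ S} → ℂ) :
    (polyOfCoeffs S c).natDegree ≤ u :=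
  natDegree_le_iff_coeff_eq_zero.2 fun _ hu =>
    coeff_polyOfCoeffs_of_notMem c fun hs => hu.not_ge (h _ hs)

lemma eventually_map_polyOfCoeffs_ne_zero (ℓ : ℂ[X] →ₗ[ℂ] ℂ) {s : ℕ} (hs : s ∈ S)
    (h : ℓ (X ^ s) ≠ 0) :
    ∀ᶠ c in zariskiGeneric {s // s ∈ S} ℂ, ℓ (polyOfCoeffs S c) ≠ 0 := by
  have heval (c : {s // s ∈ S} → ℂ) : MvPolynomial.eval c
      (∑ t : {s // s ∈ S}, MvPolynomial.X t * MvPolynomial.C (ℓ (X ^ (t : ℕ)))) =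
        ℓ (polyOfCoeffs S c) := by
    simp [map_polyOfCoeffs]
  refine eventually_zariskiGeneric_iff.2 ⟨_, fun h0 => h ?_, fun c hc => (heval c) ▸ hc⟩
  have hsingle := heval (Pi.single ⟨s, hs⟩ 1)
  rw [h0, map_zero, map_polyOfCoeffs, Finset.sum_eq_single_of_mem ⟨s, hs⟩ (Finset.mem_univ _)]
    at hsingle
  · simpa using hsingle.symm
  · intro t _ ht
    rw [Pi.single_eq_of_ne ht, zero_smul]

lemma eventually_eval_map_polyOfCoeffs_ne_zero (Λ : ℂ[X] →ₗ[ℂ] ℂ[X]) (S : Finset ℕ)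
    (Z : Finset ℂ) :
    ∀ᶠ c in zariskiGeneric {s // s ∈ S} ℂ, ∀ r ∈ Z,
      (∃ s ∈ S, (Λ (X ^ s)).eval r ≠ 0) → (Λ (polyOfCoeffs S c)).eval r ≠ 0 := by
  refine (Filter.eventually_all_finset Z).2 fun r _ => ?_
  rw [Filter.eventually_imp_distrib_left]
  rintro ⟨s, hs, h⟩
  exact eventually_map_polyOfCoeffs_ne_zero (leval r ∘ₗ Λ) hs h

/-- A Bertini argument: `b` avoids the zeros of one member of the first linear system, unless they
are base points of the second; then `a` avoids the zeros of `Λ (polyOfCoeffs T b)`. -/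
lemma exists_isCoprime_map_polyOfCoeffs (Λ : ℂ[X] →ₗ[ℂ] ℂ[X]) {S T : Finset ℕ} {n : ℕ}
    (hS : ∃ s ∈ S, (Λ (X ^ s)).coeff n ≠ 0) (hT : ∃ t ∈ T, Λ (X ^ t) ≠ 0)
    (hbase : ∀ r, ∃ s ∈ S ∪ T, (Λ (X ^ s)).eval r ≠ 0) :
    ∃ (a : {s // s ∈ S} → ℂ) (b : {s // s ∈ T} → ℂ), (Λ (polyOfCoeffs S a)).coeff n ≠ 0 ∧
      IsCoprime (Λ (polyOfCoeffs S a)) (Λ (polyOfCoeffs T b)) := by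
  classical
  obtain ⟨s, hs, hsn⟩ := hS
  obtain ⟨t, ht, htk⟩ := hT
  have hs0 : Λ (X ^ s) ≠ 0 := fun h => hsn (by rw [h, coeff_zero])
  obtain ⟨k, hk⟩ : ∃ k, (Λ (X ^ t)).coeff k ≠ 0 := by
    contrapose! htk
    exact Polynomial.ext htk
  obtain ⟨b, hb, hbk⟩ := ((eventually_eval_map_polyOfCoeffs_ne_zero Λ T
    (Λ (X ^ s)).roots.toFinset).and
      (eventually_map_polyOfCoeffs_ne_zero (lcoeff ℂ k ∘ₗ Λ) ht hk)).exists
  have hb0 : Λ (polyOfCoeffs T b) ≠ 0 := fun h => hbk (by simp [h])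
  obtain ⟨a, ha, han⟩ := ((eventually_eval_map_polyOfCoeffs_ne_zero Λ S
    (Λ (polyOfCoeffs T b)).roots.toFinset).and
      (eventually_map_polyOfCoeffs_ne_zero (lcoeff ℂ n ∘ₗ Λ) hs hsn)).exists
  refine ⟨a, b, han, (isCoprime_iff_aeval_ne_zero_of_isAlgClosed ℂ ℂ _ _).2 fun r => ?_⟩
  simp only [coe_aeval_eq_eval]
  by_contra! hr
  have hSr : ∀ s ∈ S, (Λ (X ^ s)).eval r = 0 := by
    by_contra! h
    exact ha r (by simp [hb0, hr.2]) h hr.1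
  obtain ⟨t, ht, htr⟩ := hbase r
  refine hb r (by simp [hs0, hSr s hs]) ⟨t, ?_, htr⟩ hr.2
  exact (Finset.mem_union.1 ht).resolve_left fun h => htr (hSr t h)

end PolyOfCoeffs

section GenericCoefficients

variable {ι : Type*} (S : ι → Finset ℕ)

/-- The `i`-th polynomial of the family with supports `S` and joint coefficient vector `c`. -/
noncomputable def coordPoly (c : (Σ i, {s // s ∈ S i}) → ℂ) (i : ι) : ℂ[X] :=
  polyOfCoeffs (S i) fun s => c ⟨i, s⟩

/-- The `i`-th polynomial of the family with supports `S` and indeterminate coefficients. -/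
noncomputable def univPoly (i : ι) : (MvPolynomial (Σ i, {s // s ∈ S i}) ℂ)[X] :=
  ∑ s ∈ (S i).attach, C (MvPolynomial.X ⟨i, s⟩) * X ^ (s : ℕ)

variable {S}

lemma map_eval_univPoly (c : (Σ i, {s // s ∈ S i}) → ℂ) (i : ι) :
    (univPoly S i).map (MvPolynomial.eval c) = coordPoly S c i := by
  simp [univPoly, coordPoly, polyOfCoeffs, Polynomial.map_sum]

lemma natDegree_univPoly_le {i : ι} {u : ℕ} (h : ∀ s ∈ S i, s ≤ u) :
    (univPoly S i).natDegree ≤ u :=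
  natDegree_sum_le_of_forall_le _ _ fun s _ => (natDegree_C_mul_X_pow_le _ _).trans (h s s.2)

lemma natDegree_coordPoly_le {i : ι} {u : ℕ} (h : ∀ s ∈ S i, s ≤ u)
    (c : (Σ i, {s // s ∈ S i}) → ℂ) : (coordPoly S c i).natDegree ≤ u :=
  natDegree_polyOfCoeffs_le h _

lemma eventually_isCoprime_coordPoly {i j : ι} (hij : i ≠ j) (hj : (S j).Nonempty) {u : ℕ}
    (hle : ∀ s ∈ S i, s ≤ u) (hu : u ∈ S i) (h0 : 0 ∈ S i ∨ 0 ∈ S j) :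
    ∀ᶠ c in zariskiGeneric (Σ i, {s // s ∈ S i}) ℂ,
      (coordPoly S c i).coeff u ≠ 0 ∧ IsCoprime (coordPoly S c i) (coordPoly S c j) := by
  classical
  obtain ⟨t, ht⟩ := hj
  obtain ⟨a, b, ha, hab⟩ := exists_isCoprime_map_polyOfCoeffs .id (S := S i) (T := S j) (n := u)
    ⟨u, hu, by simp⟩ ⟨t, ht, by simp⟩ fun r =>
      ⟨0, Finset.mem_union.2 h0, by simp⟩
  let d : ∀ k, {s // s ∈ S k} → ℂ := Function.update (Function.update 0 i a) j b
  let c₀ : (Σ i, {s // s ∈ S i}) → ℂ := fun x => d x.1 x.2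
  have hi : coordPoly S c₀ i = polyOfCoeffs (S i) a := by simp [coordPoly, c₀, d, hij]
  have hj : coordPoly S c₀ j = polyOfCoeffs (S j) b := by simp [coordPoly, c₀, d]
  have hopen := eventually_isCoprime_map (f := univPoly S i) (g := univPoly S j) (c₀ := c₀)
    (natDegree_univPoly_le hle) (by rwa [map_eval_univPoly, hi])
    (by rwa [map_eval_univPoly, map_eval_univPoly, hi, hj])
  simpa only [map_eval_univPoly] using hopen

lemma eventually_isCoprime_coordPoly_and_max_natDegree_eq {i j : ι} (hij : i ≠ j)
    (hi : (S i).Nonempty) (hj : (S j).Nonempty) {u : ℕ} (hle : ∀ i, ∀ s ∈ S i, s ≤ u)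
    (hu : u ∈ S i ∨ u ∈ S j) (h0 : 0 ∈ S i ∨ 0 ∈ S j) :
    ∀ᶠ c in zariskiGeneric (Σ i, {s // s ∈ S i}) ℂ,
      IsCoprime (coordPoly S c i) (coordPoly S c j) ∧
        max (coordPoly S c i).natDegree (coordPoly S c j).natDegree = u := by
  wlog hui : u ∈ S i generalizing i j
  · filter_upwards [this hij.symm hj hi hu.symm h0.symm (hu.resolve_left hui)] with c hc
    exact ⟨hc.1.symm, (max_comm _ _).trans hc.2⟩
  filter_upwards [eventually_isCoprime_coordPoly hij hj (hle i) hui h0] with c hc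
  refine ⟨hc.2, (max_le ?_ ?_).antisymm (le_max_of_le_left (le_natDegree_of_ne_zero hc.1))⟩
  · exact natDegree_coordPoly_le (hle i) c
  · exact natDegree_coordPoly_le (hle j) c

end GenericCoefficients

section Birational

lemma eq_one_of_forall_pow_eq_one {G : Type*} [Monoid G] {r : G} {s : Finset ℕ}
    (hgcd : (s.filter (fun k => k ≠ 0)).gcd id = 1) (h : ∀ k ∈ s, r ^ k = 1) : r = 1 := by
  have hdvd : orderOf r ∣ (s.filter (fun k => k ≠ 0)).gcd id :=
    Finset.dvd_gcd fun k hk => orderOf_dvd_of_pow_eq_one (h k (Finset.mem_of_mem_filter k hk))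
  rwa [hgcd, Nat.dvd_one, orderOf_eq_one_iff] at hdvd

/-- Conditions on a denominator `Q` with support `T` under which, for generic numerators, the
parameter `1` is alone in its fibre: the first excludes a pole at `1`, the next two exclude `∞` from
the fibre, and the last one excludes other roots of unity. -/
structure SeparatesOne (T : Finset ℕ) (u : ℕ) (Q : ℂ[X]) : Prop where
  eval_one_ne_zero : Q.eval 1 ≠ 0
  coeff_ne_zero_iff : Q.coeff u ≠ 0 ↔ u ∈ T
  eval_one_ne_coeff : 0 ∈ T → Q.eval 1 ≠ Q.coeff u
  pow_eq_one : ∀ ζ : ℂ, ζ ^ u = 1 → Q.eval ζ = Q.eval 1 → ∀ t ∈ T, ζ ^ t = 1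

lemma eventually_separatesOne {T : Finset ℕ} (hT : T.Nonempty) {u : ℕ} (hu : 0 < u) :
    ∀ᶠ q in zariskiGeneric {t // t ∈ T} ℂ, SeparatesOne T u (polyOfCoeffs T q) := by
  obtain ⟨t, ht⟩ := hT
  have heval := eventually_map_polyOfCoeffs_ne_zero (leval 1) ht (by simp)
  have hcoeff : ∀ᶠ q in zariskiGeneric {t // t ∈ T} ℂ,
      u ∈ T → (polyOfCoeffs T q).coeff u ≠ 0 := by
    refine Filter.eventually_imp_distrib_left.2 fun huT => ?_
    exact eventually_map_polyOfCoeffs_ne_zero (lcoeff ℂ u) huT (by simp)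
  have hsub : ∀ᶠ q in zariskiGeneric {t // t ∈ T} ℂ, 0 ∈ T →
      (polyOfCoeffs T q).eval 1 - (polyOfCoeffs T q).coeff u ≠ 0 := by
    refine Filter.eventually_imp_distrib_left.2 fun h0 => ?_
    exact eventually_map_polyOfCoeffs_ne_zero (leval (1 : ℂ) - lcoeff ℂ u) h0
      (by simp [coeff_one, hu.ne'])
  have hroots : ∀ᶠ q in zariskiGeneric {t // t ∈ T} ℂ, ∀ ζ ∈ nthRootsFinset u (1 : ℂ), ∀ t ∈ T,
      ζ ^ t ≠ 1 → (polyOfCoeffs T q).eval ζ - (polyOfCoeffs T q).eval 1 ≠ 0 := by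
    refine (Filter.eventually_all_finset _).2 fun ζ _ => (Filter.eventually_all_finset _).2
      fun t ht => Filter.eventually_imp_distrib_left.2 fun hζ => ?_
    exact eventually_map_polyOfCoeffs_ne_zero (leval ζ - leval 1) ht
      (by simpa [sub_eq_zero] using hζ)
  filter_upwards [heval, hcoeff, hsub, hroots] with q heval hcoeff hsub hroots
  refine ⟨heval, ⟨fun h => ?_, hcoeff⟩, fun h0 => sub_ne_zero.1 (hsub h0), fun ζ hζ hQ t ht => ?_⟩
  · exact of_not_not fun huT => h (coeff_polyOfCoeffs_of_notMem q huT)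
  · exact of_not_not fun h => hroots ζ ((mem_nthRootsFinset hu 1).2 hζ) t ht h (sub_eq_zero.2 hQ)

namespace SeparatesOne

variable {T : Finset ℕ} {n : ℕ} {Q : ℂ[X]}

lemma exists_coeff_bezoutian_ne_zero (hQ : SeparatesOne T (n + 1) Q) (hdeg : Q.natDegree ≤ n + 1)
    {A : Finset ℕ} (hA : A.Nonempty) (hle : ∀ a ∈ A, a ≤ n + 1) (h0 : 0 ∈ A ∨ 0 ∈ T)
    (hu : n + 1 ∈ A ∨ n + 1 ∈ T) : ∃ a ∈ A, (bezoutian (X ^ a) Q 1).coeff n ≠ 0 := by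
  have hcoeff {a : ℕ} (ha : a ∈ A) : (bezoutian (X ^ a) Q 1).coeff n =
      (if n + 1 = a then Q.eval 1 else 0) - Q.coeff (n + 1) := by
    rw [coeff_bezoutian ((natDegree_X_pow_le a).trans (hle a ha)) hdeg]
    simp [coeff_X_pow]
  by_cases huT : n + 1 ∈ T
  · have hne := hQ.coeff_ne_zero_iff.2 huT
    by_cases h0A : 0 ∈ A
    · exact ⟨0, h0A, by rw [hcoeff h0A]; simpa using hne⟩
    · obtain ⟨a, ha⟩ := hA
      refine ⟨a, ha, ?_⟩
      rw [hcoeff ha]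
      split_ifs
      · exact sub_ne_zero.2 (hQ.eval_one_ne_coeff (h0.resolve_left h0A))
      · simpa using hne
  · have hzero : Q.coeff (n + 1) = 0 := of_not_not (hQ.coeff_ne_zero_iff.not.2 huT)
    have huA := hu.resolve_right huT
    exact ⟨n + 1, huA, by simpa [hcoeff huA, hzero] using hQ.eval_one_ne_zero⟩

lemma exists_eval_bezoutian_ne_zero (hQ : SeparatesOne T (n + 1) Q) {A : Finset ℕ} (h0 : 0 ∈ A)
    (hu : n + 1 ∈ A) (hgcd : ((A ∪ T).filter (fun k => k ≠ 0)).gcd id = 1) (r : ℂ) :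
    ∃ a ∈ A, (bezoutian (X ^ a) Q 1).eval r ≠ 0 := by
  by_contra! hzero
  have hr (a : ℕ) (ha : a ∈ A) : Q.eval 1 * r ^ a = Q.eval r := by
    have hmul := congrArg (eval r) (X_sub_C_mul_bezoutian (X ^ a) Q 1)
    rw [eval_mul, hzero a ha, mul_zero] at hmul
    simpa [sub_eq_zero] using hmul.symm
  have hr0 : Q.eval r = Q.eval 1 := by simpa using (hr 0 h0).symm
  have hpowA : ∀ a ∈ A, r ^ a = 1 := fun a ha =>
    mul_left_cancel₀ hQ.eval_one_ne_zero (by rw [hr a ha, hr0, mul_one])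
  have hpow : ∀ k ∈ A ∪ T, r ^ k = 1 := fun k hk =>
    (Finset.mem_union.1 hk).elim (hpowA k) (hQ.pow_eq_one r (hpowA _ hu) hr0 k)
  obtain rfl : r = 1 := eq_one_of_forall_pow_eq_one hgcd hpow
  have hderiv0 : Q.derivative.eval 1 = 0 := by
    simpa [eval_bezoutian_self] using hzero 0 h0
  have hderiv := hzero (n + 1) hu
  simp only [eval_bezoutian_self, hderiv0, derivative_X_pow, eval_mul, eval_C, eval_pow, eval_X,
    one_pow, mul_one, mul_zero, sub_zero, mul_eq_zero, hQ.eval_one_ne_zero, false_or] at hderiv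
  exact n.succ_ne_zero (Nat.cast_eq_zero.1 hderiv)

end SeparatesOne

variable {S : Fin 3 → Finset ℕ} {n : ℕ} (hne : ∀ i, (S i).Nonempty)
  (hgcd : ((S 0 ∪ S 1 ∪ S 2).filter (fun s => s ≠ 0)).gcd id = 1)
  (hle : ∀ i, ∀ s ∈ S i, s ≤ n + 1) (h0 : ∀ i j, i ≠ j → 0 ∈ S i ∨ 0 ∈ S j)
  (hu : ∀ i j, i ≠ j → n + 1 ∈ S i ∨ n + 1 ∈ S j)

include hne hgcd hle h0 hu

lemma exists_isCoprime_bezoutian_coordPoly : ∃ c : (Σ i, {s // s ∈ S i}) → ℂ,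
    (bezoutian (coordPoly S c 0) (coordPoly S c 2) 1).coeff n ≠ 0 ∧
      IsCoprime (bezoutian (coordPoly S c 0) (coordPoly S c 2) 1)
        (bezoutian (coordPoly S c 1) (coordPoly S c 2) 1) := by
  obtain ⟨q, hQ⟩ := (eventually_separatesOne (hne 2) n.succ_pos).exists
  have hlead (i : Fin 3) (hi : i ≠ 2) := hQ.exists_coeff_bezoutian_ne_zero
    (natDegree_polyOfCoeffs_le (hle 2) q) (hne i) (hle i) (h0 i 2 hi) (hu i 2 hi)
  obtain ⟨a, ha, han⟩ := hlead 1 (by decide)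
  obtain ⟨p₀, p₁, hp⟩ := exists_isCoprime_map_polyOfCoeffs
    (isLinearMap_bezoutian (polyOfCoeffs (S 2) q) 1).mk' (hlead 0 (by decide))
    ⟨a, ha, fun h => han (by simpa using congrArg (fun f => f.coeff n) h)⟩
    (hQ.exists_eval_bezoutian_ne_zero (Finset.mem_union.2 (h0 0 1 (by decide)))
      (Finset.mem_union.2 (hu 0 1 (by decide))) hgcd)
  let p : ∀ i, {s // s ∈ S i} → ℂ := Fin.cons p₀ (Fin.cons p₁ (Fin.cons q finZeroElim))
  exact ⟨fun x => p x.1 x.2, hp⟩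

lemma eventually_adjoin_coordPoly_div_eq_top :
    ∀ᶠ c in zariskiGeneric (Σ i, {s // s ∈ S i}) ℂ, IntermediateField.adjoin ℂ
      {algebraMap ℂ[X] (RatFunc ℂ) (coordPoly S c 0) / algebraMap _ _ (coordPoly S c 2),
        algebraMap ℂ[X] (RatFunc ℂ) (coordPoly S c 1) / algebraMap _ _ (coordPoly S c 2)} = ⊤ := by
  obtain ⟨c₀, hlead, hcop⟩ := exists_isCoprime_bezoutian_coordPoly hne hgcd hle h0 hu
  have hmap (c : (Σ i, {s // s ∈ S i}) → ℂ) (i : Fin 3) :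
      (bezoutian (univPoly S i) (univPoly S 2) 1).map (MvPolynomial.eval c) =
        bezoutian (coordPoly S c i) (coordPoly S c 2) 1 := by
    rw [← bezoutian_map, map_one, map_eval_univPoly, map_eval_univPoly]
  have hopen := eventually_isCoprime_map (f := bezoutian (univPoly S 0) (univPoly S 2) 1)
    (g := bezoutian (univPoly S 1) (univPoly S 2) 1) (c₀ := c₀)
    (natDegree_bezoutian_le (natDegree_univPoly_le (hle 0)) (natDegree_univPoly_le (hle 2)) 1)
    (by rwa [hmap]) (by rwa [hmap, hmap])
  simp only [hmap] at hopen
  filter_upwards [hopen] with c hc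
  exact adjoin_div_eq_top_of_isCoprime_bezoutian (natDegree_coordPoly_le (hle 0) c)
    (natDegree_coordPoly_le (hle 2) c) hc.1 hc.2

end Birational

section SupportIntervals

variable {α : Type*} [LinearOrder α] {A B : Finset α} {hA : A.Nonempty} {hB : B.Nonempty} {a : α}

lemma mem_or_mem_of_min_min'_eq (h : min (A.min' hA) (B.min' hB) = a) : a ∈ A ∨ a ∈ B := by
  subst h
  obtain h | h := min_choice (A.min' hA) (B.min' hB) <;> rw [h]
  · exact .inl (A.min'_mem hA)
  · exact .inr (B.min'_mem hB)

lemma mem_or_mem_of_max_max'_eq (h : max (A.max' hA) (B.max' hB) = a) : a ∈ A ∨ a ∈ B := by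
  subst h
  obtain h | h := max_choice (A.max' hA) (B.max' hB) <;> rw [h]
  · exact .inl (A.max'_mem hA)
  · exact .inr (B.max'_mem hB)

end SupportIntervals

/-- Case (1A): if the convex hull of `B_i ∪ B_j` equals `[0, u]` for every pair `i ≠ j`,
then the implicit Newton polygon is the triangle with vertices `(0,0)`, `(u,0)`, `(0,u)`. -/
theorem implicit_polygon_triangle (S : Fin 3 → Finset ℕ) (hne : ∀ i, (S i).Nonempty)
    (hgcd : ((S 0 ∪ S 1 ∪ S 2).filter (fun s => s ≠ 0)).gcd id = 1)
    (u : ℕ)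
    (hu : u = max ((S 0).max' (hne 0)) (max ((S 1).max' (hne 1)) ((S 2).max' (hne 2))))
    (hu1 : 1 ≤ u)
    (hall : ∀ i j : Fin 3, i ≠ j →
      min ((S i).min' (hne i)) ((S j).min' (hne j)) = 0 ∧
      max ((S i).max' (hne i)) ((S j).max' (hne j)) = u) :
    ∃ G : MvPolynomial (Σ i : Fin 3, {s // s ∈ S i}) ℂ, G ≠ 0 ∧
      ∀ c : (Σ i : Fin 3, {s // s ∈ S i}) → ℂ, MvPolynomial.eval c G ≠ 0 →
        ∀ φ : MvPolynomial (Fin 2) ℂ, Irreducible φ → vanishesSame S c φ →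
          newtonPolygon φ =
            convexHull ℝ {((0 : ℝ), (0 : ℝ)), ((u : ℝ), (0 : ℝ)), ((0 : ℝ), (u : ℝ))} := by
  have hle (i : Fin 3) (s : ℕ) (hs : s ∈ S i) : s ≤ u := by
    obtain ⟨j, hj⟩ := exists_ne i
    exact ((S i).le_max' s hs).trans ((le_max_left _ _).trans_eq (hall i j hj.symm).2)
  have h0 (i j : Fin 3) (hij : i ≠ j) := mem_or_mem_of_min_min'_eq (hall i j hij).1
  have hmax (i j : Fin 3) (hij : i ≠ j) := mem_or_mem_of_max_max'_eq (hall i j hij).2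
  have hpair (i j : Fin 3) (hij : i ≠ j) := eventually_isCoprime_coordPoly_and_max_natDegree_eq hij
    (hne i) (hne j) hle (hmax i j hij) (h0 i j hij)
  obtain ⟨n, rfl⟩ := Nat.exists_eq_add_of_le' hu1
  refine eventually_zariskiGeneric_iff.1 ?_
  filter_upwards [hpair 0 1 (by decide), hpair 1 2 (by decide), hpair 2 0 (by decide),
    eventually_adjoin_coordPoly_div_eq_top hne hgcd hle h0 hmax]
    with c ⟨h₀₁, d₀₁⟩ ⟨h₁₂, d₁₂⟩ ⟨h₂₀, d₂₀⟩ htop φ hφ hvanish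
  have hassoc := associated_implicitEquation (natDegree_coordPoly_le (hle 0) c)
    (natDegree_coordPoly_le (hle 1) c) h₂₀ d₂₀ rfl rfl htop hφ hvanish
  rw [newtonPolygon, support_eq_of_associated hassoc]
  exact newtonPolygon_implicitEquation h₀₁ h₁₂ h₂₀ d₀₁ d₁₂ d₂₀
end
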